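/- For an almost quaternion-Hermitian 4n-manifold with n > 1, the six Sp(n)Sp(1)-components of the intrinsic torsion ξ are computed from the three-forms β_A as follows: (i) ψ^{(3)} = (1/12)(β_I^{(3)} + β_J^{(3)} + β_K^{(3)}); (ii) ψ^{(3)}_A = −(1/8) β_A^{(3)} + (1/48)(3 + 𝓛_A) Σ_{B=I,J,K} β_B^{(3)}; (iii) ψ^{(K)} = −(1/48)(β_I^{(K)} + β_J^{(K)} + β_K^{(K)}); (iv) ψ^{(K)}_A = −(1/2) β_A^{(K)} + (1/6) Σ_{B=I,J,K} β_B^{(K)}; (v) θ^ξ = (n/(24(2n−1))) Σ_{A=I,J,K} (ν^A_3 − 2Aλ_A); (vi) θ^ξ_A = (n/(4(n+1))) ( (ν^A_3 − 2Aλ_A) − ((n−1)/(2(2n−1))) Σ_{B=I,J,K} (ν^B_3 − 2Bλ_B) ). -/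

import Mathlib

/-!  Synthetic (Koszul-style) model of an almost quaternion-Hermitian `4n`-manifold.

`C` plays the role of the commutative ℝ-algebra of smooth functions and `V` that of
the `C`-module of vector fields, equipped with a directional derivative `D`, a Lie
bracket, a Riemannian metric `g` together with its Levi-Civita connection `nab`
(characterised by being torsion-free and metric), a local adapted basis `I, J, K`
of anticommuting almost complex structures with `K = I J`, each compatible with the
metric, and a (local) orthonormal frame.  -/

noncomputable section

open scoped BigOperators

structure AQH (n : ℕ) (C : Type*) (V : Type*) [CommRing C] [Algebra ℝ C]
    [AddCommGroup V] [Module C V] where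
  /-- derivative of a function along a vector field -/
  D : V → C → C
  D_add : ∀ X f g, D X (f + g) = D X f + D X g
  D_mul : ∀ X f g, D X (f * g) = f * D X g + g * D X f
  D_const : ∀ X (r : ℝ), D X (algebraMap ℝ C r) = 0
  D_addX : ∀ X Y f, D (X + Y) f = D X f + D Y f
  D_smulX : ∀ (f : C) (X : V) (h : C), D (f • X) h = f * D X h
  /-- the Lie bracket of vector fields -/
  bracket : V → V → V
  bracket_skew : ∀ X Y, bracket X Y = -bracket Y X
  bracket_add : ∀ X Y Z, bracket X (Y + Z) = bracket X Y + bracket X Z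
  bracket_smul : ∀ X (f : C) Y, bracket X (f • Y) = f • bracket X Y + (D X f) • Y
  bracket_jacobi : ∀ X Y Z,
    bracket X (bracket Y Z) + bracket Y (bracket Z X) + bracket Z (bracket X Y) = 0
  D_bracket : ∀ X Y f, D (bracket X Y) f = D X (D Y f) - D Y (D X f)
  /-- the Riemannian metric -/
  g : V → V → C
  g_symm : ∀ X Y, g X Y = g Y X
  g_add : ∀ X Y Z, g (X + Y) Z = g X Z + g Y Z
  g_smul : ∀ (f : C) X Y, g (f • X) Y = f * g X Y
  /-- the Levi-Civita connection -/
  nab : V → V → V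
  nab_addX : ∀ X Y Z, nab (X + Y) Z = nab X Z + nab Y Z
  nab_smulX : ∀ (f : C) X Y, nab (f • X) Y = f • nab X Y
  nab_add : ∀ X Y Z, nab X (Y + Z) = nab X Y + nab X Z
  nab_leibniz : ∀ X (f : C) Y, nab X (f • Y) = f • nab X Y + (D X f) • Y
  torsion_free : ∀ X Y, nab X Y - nab Y X = bracket X Y
  nab_metric : ∀ X Y Z, D X (g Y Z) = g (nab X Y) Z + g Y (nab X Z)
  /-- the (local) adapted basis of almost complex structures -/
  I : V → V
  J : V → V
  K : V → V
  I_lin : ∀ (f : C) X Y, I (f • X + Y) = f • I X + I Y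
  J_lin : ∀ (f : C) X Y, J (f • X + Y) = f • J X + J Y
  K_lin : ∀ (f : C) X Y, K (f • X + Y) = f • K X + K Y
  I_sq : ∀ X, I (I X) = -X
  J_sq : ∀ X, J (J X) = -X
  K_def : ∀ X, K X = I (J X)
  anticomm : ∀ X, I (J X) = -J (I X)
  I_metric : ∀ X Y, g (I X) (I Y) = g X Y
  J_metric : ∀ X Y, g (J X) (J Y) = g X Y
  /-- a (local) orthonormal frame -/
  frame : Fin (4 * n) → V
  frame_orthonormal : ∀ i j, g (frame i) (frame j) = if i = j then 1 else 0
  frame_span : ∀ X, X = ∑ i, g X (frame i) • frame i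

namespace AQH

section ops

variable {C V : Type*} [CommRing C]

/-- the operator `A_(1)` on covariant 3-tensors -/
def op1 (A : V → V) (ψ : V → V → V → C) : V → V → V → C := fun X Y Z => -ψ (A X) Y Z

/-- the operator `A_(2)` on covariant 3-tensors -/
def op2 (A : V → V) (ψ : V → V → V → C) : V → V → V → C := fun X Y Z => -ψ X (A Y) Z

/-- the operator `A_(3)` on covariant 3-tensors -/
def op3 (A : V → V) (ψ : V → V → V → C) : V → V → V → C := fun X Y Z => -ψ X Y (A Z)

/-- the operator `A_(12) = A_(1) A_(2)` on covariant 3-tensors -/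
def op12 (A : V → V) (ψ : V → V → V → C) : V → V → V → C := fun X Y Z => ψ (A X) (A Y) Z

/-- the operator `A_(13) = A_(1) A_(3)` on covariant 3-tensors -/
def op13 (A : V → V) (ψ : V → V → V → C) : V → V → V → C := fun X Y Z => ψ (A X) Y (A Z)

/-- the operator `A_(23) = A_(2) A_(3)` on covariant 3-tensors -/
def op23 (A : V → V) (ψ : V → V → V → C) : V → V → V → C := fun X Y Z => ψ X (A Y) (A Z)

/-- the operator `𝓛_A = A_(12) + A_(13) + A_(23)` on three-forms -/
def calL (A : V → V) (ψ : V → V → V → C) : V → V → V → C :=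
  fun X Y Z => op12 A ψ X Y Z + op13 A ψ X Y Z + op23 A ψ X Y Z

/-- the action `(A ν)(X) = -ν (A X)` of `A` on a one-form -/
def act1 (A : V → V) (ν : V → C) : V → C := fun X => -ν (A X)

/-- the action `(A ψ)(X,Y,Z) = -ψ(AX,AY,AZ)` of `A` on a three-form -/
def act3 (A : V → V) (ψ : V → V → V → C) : V → V → V → C :=
  fun X Y Z => -ψ (A X) (A Y) (A Z)

/-- wedge product of two one-forms -/
def wedge11 (α β : V → C) : V → V → C := fun X Y => α X * β Y - α Y * β X

/-- wedge product of a one-form and a two-form -/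
def wedge12 (ν : V → C) (ω : V → V → C) : V → V → V → C :=
  fun X Y Z => ν X * ω Y Z - ν Y * ω X Z + ν Z * ω X Y

/-- wedge product of two two-forms -/
def wedge22 (α β : V → V → C) : V → V → V → V → C := fun X Y Z W =>
  α X Y * β Z W - α X Z * β Y W + α X W * β Y Z
    + α Z W * β X Y - α Y W * β X Z + α Y Z * β X W

/-- a (0,3)-tensor is an alternating three-form -/
def IsAlt3 (T : V → V → V → C) : Prop :=
  (∀ X Y Z, T Y X Z = -T X Y Z) ∧ (∀ X Y Z, T X Z Y = -T X Y Z)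

variable [AddCommGroup V] [Module C V]

/-- `C`-linearity (tensoriality) of a three-form in its first argument -/
def Lin3 (T : V → V → V → C) : Prop :=
  ∀ (f : C) X X' Y Z, T (f • X + X') Y Z = f * T X Y Z + T X' Y Z

/-- `C`-linearity (tensoriality) of a one-form -/
def Lin1 (ν : V → C) : Prop := ∀ (f : C) X X', ν (f • X + X') = f * ν X + ν X'

end ops

section derived

variable {n : ℕ} {C V : Type*} [CommRing C] [Algebra ℝ C] [AddCommGroup V] [Module C V]
  [Module ℝ V] [IsScalarTower ℝ C V]

variable (M : AQH n C V)

/-- the Kähler form `ω_A(X,Y) = g(X, A Y)` -/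
def omega (A : V → V) : V → V → C := fun X Y => M.g X (A Y)

/-- `(∇_X A) Y` -/
def nabA (A : V → V) : V → V → V := fun X Y => M.nab X (A Y) - A (M.nab X Y)

/-- covariant derivative of a 2-form: `(∇_X ψ)(Y,Z)` -/
def nab2 (ψ : V → V → C) : V → V → V → C :=
  fun X Y Z => M.D X (ψ Y Z) - ψ (M.nab X Y) Z - ψ Y (M.nab X Z)

/-- covariant derivative of a 4-form -/
def nab4 (ψ : V → V → V → V → C) : V → V → V → V → V → C :=
  fun X Y Z W U => M.D X (ψ Y Z W U) - ψ (M.nab X Y) Z W U - ψ Y (M.nab X Z) W U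
    - ψ Y Z (M.nab X W) U - ψ Y Z W (M.nab X U)

/-- exterior derivative of a one-form -/
def d1 (ν : V → C) : V → V → C :=
  fun X Y => M.D X (ν Y) - M.D Y (ν X) - ν (M.bracket X Y)

/-- exterior derivative of a two-form -/
def d2 (ψ : V → V → C) : V → V → V → C :=
  fun X Y Z => M.D X (ψ Y Z) - M.D Y (ψ X Z) + M.D Z (ψ X Y)
    - ψ (M.bracket X Y) Z + ψ (M.bracket X Z) Y - ψ (M.bracket Y Z) X

/-- exterior derivative of a four-form -/
def d4 (ψ : V → V → V → V → C) : V → V → V → V → V → C := fun X Y Z W U =>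
  M.D X (ψ Y Z W U) - M.D Y (ψ X Z W U) + M.D Z (ψ X Y W U) - M.D W (ψ X Y Z U)
      + M.D U (ψ X Y Z W)
    - ψ (M.bracket X Y) Z W U + ψ (M.bracket X Z) Y W U - ψ (M.bracket X W) Y Z U
      + ψ (M.bracket X U) Y Z W
    - ψ (M.bracket Y Z) X W U + ψ (M.bracket Y W) X Z U - ψ (M.bracket Y U) X Z W
    - ψ (M.bracket Z W) X Y U + ψ (M.bracket Z U) X Y W
    - ψ (M.bracket W U) X Y Z

/-- the Nijenhuis tensor `N_A(X,Y)` -/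
def nijV (A : V → V) : V → V → V := fun X Y =>
  M.bracket X Y + A (M.bracket (A X) Y) + A (M.bracket X (A Y)) - M.bracket (A X) (A Y)

/-- the Nijenhuis `(0,3)`-tensor `N_A(X,Y,Z) = g(X, N_A(Y,Z))` -/
def nij3 (A : V → V) : V → V → V → C := fun X Y Z => M.g X (M.nijV A Y Z)

/-- the induced inner product of two 2-forms,
`⟨ψ,φ⟩ = (1/2!) ψ(e_i,e_j) φ(e_i,e_j)` -/
def inner2 (ψ φ : V → V → C) : C :=
  (1/2 : ℝ) • ∑ i, ∑ j, ψ (M.frame i) (M.frame j) * φ (M.frame i) (M.frame j)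

/-- the contraction `(Λ_A β)(X) = ⟨X ⌟ β, ω_A⟩` of a three-form -/
def Lam (A : V → V) (β : V → V → V → C) : V → C :=
  fun X => (1/2 : ℝ) •
    ∑ i, ∑ j, β X (M.frame i) (M.frame j) * M.omega A (M.frame i) (M.frame j)

/-- `λ_I(X) = (1/2n) ⟨∇_X ω_J, ω_K⟩` -/
def lambdaI : V → C := fun X =>
  (1/(2*(n:ℝ))) • M.inner2 (fun Y Z => M.nab2 (M.omega M.J) X Y Z) (M.omega M.K)

/-- `λ_J(X) = (1/2n) ⟨∇_X ω_K, ω_I⟩` -/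
def lambdaJ : V → C := fun X =>
  (1/(2*(n:ℝ))) • M.inner2 (fun Y Z => M.nab2 (M.omega M.K) X Y Z) (M.omega M.I)

/-- `λ_K(X) = (1/2n) ⟨∇_X ω_I, ω_J⟩` -/
def lambdaK : V → C := fun X =>
  (1/(2*(n:ℝ))) • M.inner2 (fun Y Z => M.nab2 (M.omega M.I) X Y Z) (M.omega M.J)

/-- codifferential of a two-form -/
def codiff2 (ψ : V → V → C) : V → C := fun Z => -∑ i, M.nab2 ψ (M.frame i) (M.frame i) Z

/-- codifferential of a four-form -/
def codiff4 (ψ : V → V → V → V → C) : V → V → V → C :=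
  fun X Y Z => -∑ i, M.nab4 ψ (M.frame i) (M.frame i) X Y Z

/-- `β_I = J dω_J + K dω_K` -/
def betaI : V → V → V → C := fun X Y Z =>
  act3 M.J (M.d2 (M.omega M.J)) X Y Z + act3 M.K (M.d2 (M.omega M.K)) X Y Z

/-- `β_J = K dω_K + I dω_I` -/
def betaJ : V → V → V → C := fun X Y Z =>
  act3 M.K (M.d2 (M.omega M.K)) X Y Z + act3 M.I (M.d2 (M.omega M.I)) X Y Z

/-- `β_K = I dω_I + J dω_J` -/
def betaK : V → V → V → C := fun X Y Z =>
  act3 M.I (M.d2 (M.omega M.I)) X Y Z + act3 M.J (M.d2 (M.omega M.J)) X Y Z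

/-- the intrinsic torsion
`ξ_X Y = -(1/4) Σ_A A (∇_X A) Y + (1/2) Σ_A λ_A(X) A Y` -/
def xi : V → V → V := fun X Y =>
  (-(1/4 : ℝ)) • (M.I (M.nabA M.I X Y) + M.J (M.nabA M.J X Y) + M.K (M.nabA M.K X Y))
    + (1/2 : ℝ) • (M.lambdaI X • M.I Y + M.lambdaJ X • M.J Y + M.lambdaK X • M.K Y)

/-- the one-form `ν^I_4 = I Λ_I β_I` -/
def nu4I : V → C := act1 M.I (M.Lam M.I M.betaI)

/-- the one-form `ν^J_4 = J Λ_J β_J` -/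
def nu4J : V → C := act1 M.J (M.Lam M.J M.betaJ)

/-- the one-form `ν^K_4 = K Λ_K β_K` -/
def nu4K : V → C := act1 M.K (M.Lam M.K M.betaK)

/-- `ν^I_3`, determined by `J Λ_J β_I = (1/(2n-1)) (ν^I_4 + (2n+1)(n-1) ν^I_3)` -/
def nu3I : V → C := fun X =>
  (1/((2*(n:ℝ)+1) * ((n:ℝ)-1))) •
    ((2*(n:ℝ)-1) • act1 M.J (M.Lam M.J M.betaI) X - M.nu4I X)

/-- `ν^J_3`, determined by `K Λ_K β_J = (1/(2n-1)) (ν^J_4 + (2n+1)(n-1) ν^J_3)` -/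
def nu3J : V → C := fun X =>
  (1/((2*(n:ℝ)+1) * ((n:ℝ)-1))) •
    ((2*(n:ℝ)-1) • act1 M.K (M.Lam M.K M.betaJ) X - M.nu4J X)

/-- `ν^K_3`, determined by `I Λ_I β_K = (1/(2n-1)) (ν^K_4 + (2n+1)(n-1) ν^K_3)` -/
def nu3K : V → C := fun X =>
  (1/((2*(n:ℝ)+1) * ((n:ℝ)-1))) •
    ((2*(n:ℝ)-1) • act1 M.I (M.Lam M.I M.betaK) X - M.nu4K X)

/-- `β^{(E)}_{3I} = -(1/2) Jν^I_3 ∧ ω_J - (1/2) Kν^I_3 ∧ ω_K + (1/(2n-1)) Iν^I_3 ∧ ω_I` -/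
def betaE3I : V → V → V → C := fun X Y Z =>
  (-(1/2:ℝ)) • wedge12 (act1 M.J M.nu3I) (M.omega M.J) X Y Z
    + (-(1/2:ℝ)) • wedge12 (act1 M.K M.nu3I) (M.omega M.K) X Y Z
    + (1/(2*(n:ℝ)-1)) • wedge12 (act1 M.I M.nu3I) (M.omega M.I) X Y Z

def betaE3J : V → V → V → C := fun X Y Z =>
  (-(1/2:ℝ)) • wedge12 (act1 M.K M.nu3J) (M.omega M.K) X Y Z
    + (-(1/2:ℝ)) • wedge12 (act1 M.I M.nu3J) (M.omega M.I) X Y Z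
    + (1/(2*(n:ℝ)-1)) • wedge12 (act1 M.J M.nu3J) (M.omega M.J) X Y Z

def betaE3K : V → V → V → C := fun X Y Z =>
  (-(1/2:ℝ)) • wedge12 (act1 M.I M.nu3K) (M.omega M.I) X Y Z
    + (-(1/2:ℝ)) • wedge12 (act1 M.J M.nu3K) (M.omega M.J) X Y Z
    + (1/(2*(n:ℝ)-1)) • wedge12 (act1 M.K M.nu3K) (M.omega M.K) X Y Z

/-- `β_{4I} = -(1/(2n-1)) Iν^I_4 ∧ ω_I` -/
def beta4I : V → V → V → C := fun X Y Z =>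
  (-(1/(2*(n:ℝ)-1))) • wedge12 (act1 M.I M.nu4I) (M.omega M.I) X Y Z

def beta4J : V → V → V → C := fun X Y Z =>
  (-(1/(2*(n:ℝ)-1))) • wedge12 (act1 M.J M.nu4J) (M.omega M.J) X Y Z

def beta4K : V → V → V → C := fun X Y Z =>
  (-(1/(2*(n:ℝ)-1))) • wedge12 (act1 M.K M.nu4K) (M.omega M.K) X Y Z

/-- `β_I^{(3+K)} = β_I - β^{(E)}_{3I} - β_{4I}` -/
def beta3KI : V → V → V → C := fun X Y Z => M.betaI X Y Z - M.betaE3I X Y Z - M.beta4I X Y Z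

def beta3KJ : V → V → V → C := fun X Y Z => M.betaJ X Y Z - M.betaE3J X Y Z - M.beta4J X Y Z

def beta3KK : V → V → V → C := fun X Y Z => M.betaK X Y Z - M.betaE3K X Y Z - M.beta4K X Y Z

/-- `β_I^{(3)} = (1/6) (2 - 𝓛_J - 𝓛_K) β_I^{(3+K)}` -/
def beta3I : V → V → V → C := fun X Y Z =>
  (1/6:ℝ) • ((2:ℝ) • M.beta3KI X Y Z - calL M.J M.beta3KI X Y Z - calL M.K M.beta3KI X Y Z)

def beta3J : V → V → V → C := fun X Y Z =>
  (1/6:ℝ) • ((2:ℝ) • M.beta3KJ X Y Z - calL M.K M.beta3KJ X Y Z - calL M.I M.beta3KJ X Y Z)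

def beta3K : V → V → V → C := fun X Y Z =>
  (1/6:ℝ) • ((2:ℝ) • M.beta3KK X Y Z - calL M.I M.beta3KK X Y Z - calL M.J M.beta3KK X Y Z)

/-- `β_I^{(K)} = (1/6) (4 + 𝓛_J + 𝓛_K) β_I^{(3+K)}` -/
def betaKI : V → V → V → C := fun X Y Z =>
  (1/6:ℝ) • ((4:ℝ) • M.beta3KI X Y Z + calL M.J M.beta3KI X Y Z + calL M.K M.beta3KI X Y Z)

def betaKJ : V → V → V → C := fun X Y Z =>
  (1/6:ℝ) • ((4:ℝ) • M.beta3KJ X Y Z + calL M.K M.beta3KJ X Y Z + calL M.I M.beta3KJ X Y Z)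

def betaKK : V → V → V → C := fun X Y Z =>
  (1/6:ℝ) • ((4:ℝ) • M.beta3KK X Y Z + calL M.I M.beta3KK X Y Z + calL M.J M.beta3KK X Y Z)

/-- the three-form `ψ^{(3)} = (1/12)(β_I^{(3)} + β_J^{(3)} + β_K^{(3)})` determining `ξ_{33}` -/
def psi3 : V → V → V → C := fun X Y Z =>
  (1/12:ℝ) • (M.beta3I X Y Z + M.beta3J X Y Z + M.beta3K X Y Z)

/-- the three-form `ψ^{(K)} = -(1/48)(β_I^{(K)} + β_J^{(K)} + β_K^{(K)})` determining `ξ_{KH}` -/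
def psiK : V → V → V → C := fun X Y Z =>
  (-(1/48:ℝ)) • (M.betaKI X Y Z + M.betaKJ X Y Z + M.betaKK X Y Z)

/-- the three-form `ψ^{(3)}_I` determining `ξ_{3H}` -/
def psi3I : V → V → V → C := fun X Y Z =>
  (-(1/8:ℝ)) • M.beta3I X Y Z
    + (1/48:ℝ) • ((3:ℝ) • (M.beta3I X Y Z + M.beta3J X Y Z + M.beta3K X Y Z)
        + calL M.I (fun a b c => M.beta3I a b c + M.beta3J a b c + M.beta3K a b c) X Y Z)

def psi3J : V → V → V → C := fun X Y Z =>
  (-(1/8:ℝ)) • M.beta3J X Y Z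
    + (1/48:ℝ) • ((3:ℝ) • (M.beta3I X Y Z + M.beta3J X Y Z + M.beta3K X Y Z)
        + calL M.J (fun a b c => M.beta3I a b c + M.beta3J a b c + M.beta3K a b c) X Y Z)

def psi3K : V → V → V → C := fun X Y Z =>
  (-(1/8:ℝ)) • M.beta3K X Y Z
    + (1/48:ℝ) • ((3:ℝ) • (M.beta3I X Y Z + M.beta3J X Y Z + M.beta3K X Y Z)
        + calL M.K (fun a b c => M.beta3I a b c + M.beta3J a b c + M.beta3K a b c) X Y Z)

/-- the three-form `ψ^{(K)}_I` determining `ξ_{K3}` -/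
def psiKI : V → V → V → C := fun X Y Z =>
  (-(1/2:ℝ)) • M.betaKI X Y Z
    + (1/6:ℝ) • (M.betaKI X Y Z + M.betaKJ X Y Z + M.betaKK X Y Z)

def psiKJ : V → V → V → C := fun X Y Z =>
  (-(1/2:ℝ)) • M.betaKJ X Y Z
    + (1/6:ℝ) • (M.betaKI X Y Z + M.betaKJ X Y Z + M.betaKK X Y Z)

def psiKK : V → V → V → C := fun X Y Z =>
  (-(1/2:ℝ)) • M.betaKK X Y Z
    + (1/6:ℝ) • (M.betaKI X Y Z + M.betaKJ X Y Z + M.betaKK X Y Z)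

/-- the one-form `θ^ξ` determining `ξ_{EH}`,
defined by `(6/n)(2n+1)(n-1) θ^ξ(X) = -⟨ξ_{e_i} e_i, X⟩` -/
def thetaXi : V → C := fun X =>
  (-((n:ℝ)/(6*(2*(n:ℝ)+1)*((n:ℝ)-1)))) • ∑ i, M.g (M.xi (M.frame i) (M.frame i)) X

/-- the local one-form `θ^ξ_I`, defined by `(2/n)(2n+1)(n-1) θ^ξ_I(X) = -⟨I ξ_{e_i} I e_i, X⟩` -/
def thetaXiI : V → C := fun X =>
  (-((n:ℝ)/(2*(2*(n:ℝ)+1)*((n:ℝ)-1)))) •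
    ∑ i, M.g (M.I (M.xi (M.frame i) (M.I (M.frame i)))) X

def thetaXiJ : V → C := fun X =>
  (-((n:ℝ)/(2*(2*(n:ℝ)+1)*((n:ℝ)-1)))) •
    ∑ i, M.g (M.J (M.xi (M.frame i) (M.J (M.frame i)))) X

def thetaXiK : V → C := fun X =>
  (-((n:ℝ)/(2*(2*(n:ℝ)+1)*((n:ℝ)-1)))) •
    ∑ i, M.g (M.K (M.xi (M.frame i) (M.K (M.frame i)))) X

/-- `α_I = -λ_I ⊗ g + (1/2)(J_(2) - J_(3)) ∇ω_K` -/
def alphaI : V → V → V → C := fun X Y Z =>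
  -(M.lambdaI X * M.g Y Z)
    + (1/2:ℝ) • (-(M.nab2 (M.omega M.K) X (M.J Y) Z) + M.nab2 (M.omega M.K) X Y (M.J Z))

def alphaJ : V → V → V → C := fun X Y Z =>
  -(M.lambdaJ X * M.g Y Z)
    + (1/2:ℝ) • (-(M.nab2 (M.omega M.I) X (M.K Y) Z) + M.nab2 (M.omega M.I) X Y (M.K Z))

def alphaK : V → V → V → C := fun X Y Z =>
  -(M.lambdaK X * M.g Y Z)
    + (1/2:ℝ) • (-(M.nab2 (M.omega M.J) X (M.I Y) Z) + M.nab2 (M.omega M.J) X Y (M.I Z))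

/-- the one-form `η_I(X) = α_I(e_i; e_i, X)` -/
def etaI : V → C := fun X => ∑ i, M.alphaI (M.frame i) (M.frame i) X

def etaJ : V → C := fun X => ∑ i, M.alphaJ (M.frame i) (M.frame i) X

def etaK : V → C := fun X => ∑ i, M.alphaK (M.frame i) (M.frame i) X

/-- the fundamental four-form `Ω = Σ_A ω_A ∧ ω_A` -/
def Omega4 : V → V → V → V → C := fun X Y Z W =>
  wedge22 (M.omega M.I) (M.omega M.I) X Y Z W
    + wedge22 (M.omega M.J) (M.omega M.J) X Y Z W
    + wedge22 (M.omega M.K) (M.omega M.K) X Y Z W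

/-- the one-form `θ^{d*Ω} = (1/3) Σ_A A Λ_A d*Ω` -/
def thetaDOmega : V → C := fun X =>
  (1/3:ℝ) • (act1 M.I (M.Lam M.I (M.codiff4 M.Omega4)) X
    + act1 M.J (M.Lam M.J (M.codiff4 M.Omega4)) X
    + act1 M.K (M.Lam M.K (M.codiff4 M.Omega4)) X)

/-- the vector-valued torsion: `g(W, T(X,Y)) = T(W,X,Y)` -/
def Tvec (T : V → V → V → C) : V → V → V := fun X Y => ∑ i, T (M.frame i) X Y • M.frame i

/-- the connection `∇ + (1/2) T` associated to a torsion (0,3)-tensor `T` -/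
def nabT (T : V → V → V → C) : V → V → V := fun X Y => M.nab X Y + (1/2:ℝ) • M.Tvec T X Y

/-- a connection is metric -/
def MetricConn (nab' : V → V → V) : Prop :=
  ∀ X Y Z, M.D X (M.g Y Z) = M.g (nab' X Y) Z + M.g Y (nab' X Z)

/-- a connection is quaternionic, with associated local one-forms `γ_I, γ_J, γ_K`:
`∇'_X I = γ_K(X) J - γ_J(X) K`, and cyclically -/
def QuatConn (nab' : V → V → V) (γI γJ γK : V → C) : Prop :=
  (∀ X Y, nab' X (M.I Y) - M.I (nab' X Y) = γK X • M.J Y - γJ X • M.K Y) ∧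
  (∀ X Y, nab' X (M.J Y) - M.J (nab' X Y) = γI X • M.K Y - γK X • M.I Y) ∧
  (∀ X Y, nab' X (M.K Y) - M.K (nab' X Y) = γJ X • M.I Y - γI X • M.J Y)

/-- the HKT condition: `I, J, K` integrable and there is a metric connection
`∇ + (1/2)T` with totally skew torsion making `I, J, K` parallel -/
def IsHKT : Prop :=
  (∀ X Y, M.nijV M.I X Y = 0) ∧ (∀ X Y, M.nijV M.J X Y = 0) ∧
  (∀ X Y, M.nijV M.K X Y = 0) ∧
  ∃ T : V → V → V → C, IsAlt3 T ∧ Lin3 T ∧ M.MetricConn (M.nabT T) ∧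
    (∀ X Y, M.nabT T X (M.I Y) = M.I (M.nabT T X Y)) ∧
    (∀ X Y, M.nabT T X (M.J Y) = M.J (M.nabT T X Y)) ∧
    (∀ X Y, M.nabT T X (M.K Y) = M.K (M.nabT T X Y))

/-- membership of a three-form in `KH`: type `{2,1}` for each `A` and `Λ_A ψ = 0` -/
def InKH3 (ψ : V → V → V → C) : Prop :=
  IsAlt3 ψ ∧ Lin3 ψ ∧
  calL M.I ψ = ψ ∧ calL M.J ψ = ψ ∧ calL M.K ψ = ψ ∧
  M.Lam M.I ψ = 0 ∧ M.Lam M.J ψ = 0 ∧ M.Lam M.K ψ = 0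

/-- the `(0,3)`-tensor of the `KH`-component of the torsion determined by `ψ^{(K)}`:
`3ψ - Σ_A A_(23) ψ` -/
def xiKH3 (ψ : V → V → V → C) : V → V → V → C := fun X Y Z =>
  (3:ℝ) • ψ X Y Z - (op23 M.I ψ X Y Z + op23 M.J ψ X Y Z + op23 M.K ψ X Y Z)

/-- the `(0,3)`-tensor of the `EH`-component of the torsion determined by the
one-form `θ`: `3 e_i ⊗ e_i ∧ θ - Σ_A (e_i ⊗ A e_i ∧ A θ + (2/n) A θ ⊗ ω_A)` -/
def xiEH3 (θ : V → C) : V → V → V → C := fun X Y Z =>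
  (3:ℝ) • ∑ i, M.g (M.frame i) X *
      (M.g (M.frame i) Y * θ Z - M.g (M.frame i) Z * θ Y)
  - ((∑ i, M.g (M.frame i) X *
        (M.g (M.I (M.frame i)) Y * act1 M.I θ Z - M.g (M.I (M.frame i)) Z * act1 M.I θ Y))
    + (∑ i, M.g (M.frame i) X *
        (M.g (M.J (M.frame i)) Y * act1 M.J θ Z - M.g (M.J (M.frame i)) Z * act1 M.J θ Y))
    + (∑ i, M.g (M.frame i) X *
        (M.g (M.K (M.frame i)) Y * act1 M.K θ Z - M.g (M.K (M.frame i)) Z * act1 M.K θ Y)))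
  - (2/(n:ℝ)) • (act1 M.I θ X * M.omega M.I Y Z + act1 M.J θ X * M.omega M.J Y Z
      + act1 M.K θ X * M.omega M.K Y Z)

/-- the intrinsic torsion lies in `(K+E)H`: it is the sum of a `KH`-tensor and an
`EH`-tensor as described in §3 of the paper -/
def inKEH : Prop :=
  ∃ (ψ : V → V → V → C) (θ : V → C), M.InKH3 ψ ∧ Lin1 θ ∧
    ∀ X Y Z, M.g Y (M.xi X Z) = M.xiKH3 ψ X Y Z + M.xiEH3 θ X Y Z

end derived

end AQH


set_option linter.unusedSectionVars false
set_option linter.unusedSimpArgs false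

namespace AQH

section basics

variable {n : ℕ} {C V : Type*} [CommRing C] [Algebra ℝ C] [AddCommGroup V] [Module C V]

variable (M : AQH n C V)

theorem I_zero : M.I 0 = 0 := by
  have h := M.I_lin 1 0 0
  simpa using h
theorem J_zero : M.J 0 = 0 := by
  have h := M.J_lin 1 0 0
  simpa using h
theorem I_add (X Y : V) : M.I (X + Y) = M.I X + M.I Y := by
  simpa using M.I_lin 1 X Y
theorem J_add (X Y : V) : M.J (X + Y) = M.J X + M.J Y := by
  simpa using M.J_lin 1 X Y
theorem I_smul (f : C) (X : V) : M.I (f • X) = f • M.I X := by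
  simpa [M.I_zero] using M.I_lin f X 0
theorem J_smul (f : C) (X : V) : M.J (f • X) = f • M.J X := by
  simpa [M.J_zero] using M.J_lin f X 0
theorem I_neg (X : V) : M.I (-X) = -M.I X := by
  simpa using M.I_smul (-1) X
theorem J_neg (X : V) : M.J (-X) = -M.J X := by
  simpa using M.J_smul (-1) X
theorem JI (X : V) : M.J (M.I X) = -M.I (M.J X) := by rw [M.anticomm]; simp
theorem I_sub (X Y : V) : M.I (X - Y) = M.I X - M.I Y := by
  simp [sub_eq_add_neg, I_add, I_neg]
theorem J_sub (X Y : V) : M.J (X - Y) = M.J X - M.J Y := by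
  simp [sub_eq_add_neg, J_add, J_neg]

theorem g_zero (Y : V) : M.g 0 Y = 0 := by simpa using M.g_smul 0 0 Y
theorem g_neg (X Y : V) : M.g (-X) Y = -M.g X Y := by simpa using M.g_smul (-1) X Y
theorem g_add' (X Y Z : V) : M.g X (Y + Z) = M.g X Y + M.g X Z := by
  rw [M.g_symm, M.g_add, M.g_symm Y, M.g_symm Z]
theorem g_smul' (f : C) (X Y : V) : M.g X (f • Y) = f * M.g X Y := by
  rw [M.g_symm, M.g_smul, M.g_symm Y]
theorem g_neg' (X Y : V) : M.g X (-Y) = -M.g X Y := by simpa using M.g_smul' (-1) X Y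
theorem g_zero' (Y : V) : M.g Y 0 = 0 := by simpa using M.g_smul' 0 Y 0
theorem g_sub' (X Y Z : V) : M.g X (Y - Z) = M.g X Y - M.g X Z := by
  simp [sub_eq_add_neg, g_add', g_neg']
theorem g_sub (X Y Z : V) : M.g (X - Y) Z = M.g X Z - M.g Y Z := by
  simp [sub_eq_add_neg, g_add, g_neg]
theorem gI (X Y : V) : M.g (M.I X) Y = -M.g X (M.I Y) := by
  have h := M.I_metric X (M.I Y)
  rw [M.I_sq, M.g_neg'] at h
  rw [← h]; simp
theorem gJ (X Y : V) : M.g (M.J X) Y = -M.g X (M.J Y) := by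
  have h := M.J_metric X (M.J Y)
  rw [M.J_sq, M.g_neg'] at h
  rw [← h]; simp
theorem g_sum {ι : Type*} (s : Finset ι) (f : ι → V) (Y : V) :
    M.g (∑ i ∈ s, f i) Y = ∑ i ∈ s, M.g (f i) Y := by
  classical
  induction s using Finset.induction_on with
  | empty => simp [g_zero]
  | insert a s ha ih => simp [Finset.sum_insert ha, M.g_add, ih]

theorem nab_neg (X Y : V) : M.nab X (-Y) = -M.nab X Y := by
  have h0 : M.nab X 0 = 0 := by simpa using M.nab_add X 0 0
  have h := M.nab_add X Y (-Y)
  rw [add_neg_cancel, h0] at h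
  exact (neg_eq_of_add_eq_zero_right h.symm).symm

theorem gIs (X Y : V) : M.g Y (M.I X) = -M.g X (M.I Y) := by rw [M.g_symm, M.gI]
theorem gJs (X Y : V) : M.g Y (M.J X) = -M.g X (M.J Y) := by rw [M.g_symm, M.gJ]
theorem gIJs (X Y : V) : M.g Y (M.I (M.J X)) = -M.g X (M.I (M.J Y)) := by
  rw [M.g_symm, M.gI, M.gJ, M.JI, M.g_neg']; simp

/-- cyclic rotation of the adapted basis -/
def rot : AQH n C V :=
  { M with
    I := M.J
    J := M.K
    K := M.I
    I_lin := M.J_lin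
    J_lin := M.K_lin
    K_lin := M.I_lin
    I_sq := M.J_sq
    J_sq := fun X => by simp [M.K_def, M.JI, M.J_sq, M.I_sq, M.I_neg]
    K_def := fun X => by simp [M.K_def, M.JI, M.J_sq, M.I_neg]
    anticomm := fun X => by simp [M.K_def, M.JI, M.J_sq, M.I_neg]
    I_metric := M.J_metric
    J_metric := fun X Y => by rw [M.K_def, M.K_def, M.I_metric, M.J_metric] }

theorem g_frame (X Y : V) : ∑ i, M.g X (M.frame i) * M.g (M.frame i) Y = M.g X Y := by
  conv_rhs => rw [M.frame_span X, M.g_sum]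
  simp [M.g_smul]

theorem lin1_sum {ν : V → C} (h : Lin1 ν) {ι : Type*} (s : Finset ι) (f : ι → C) (v : ι → V) :
    ν (∑ i ∈ s, f i • v i) = ∑ i ∈ s, f i * ν (v i) := by
  classical
  have h0 : ν 0 = 0 := by simpa using h 1 0 0
  induction s using Finset.induction_on with
  | empty => simp [h0]
  | insert a s ha ih => rw [Finset.sum_insert ha, h, ih, Finset.sum_insert ha]

theorem lin1_frame {ν : V → C} (h : Lin1 ν) (X : V) :
    ∑ i, M.g X (M.frame i) * ν (M.frame i) = ν X := by
  conv_rhs => rw [M.frame_span X, lin1_sum h]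

theorem lin1_neg {ν : V → C} (h : Lin1 ν) (X : V) : ν (-X) = -ν X := by
  have h0 : ν 0 = 0 := by simpa using h 1 0 0
  simpa [h0] using h (-1) X 0

end basics

section conn

variable {n : ℕ} {C V : Type*} [CommRing C] [Algebra ℝ C] [AddCommGroup V] [Module C V]
  [Module ℝ V] [IsScalarTower ℝ C V]

variable (M : AQH n C V)

theorem I_rsmul (f : ℝ) (X : V) : M.I (f • X) = f • M.I X := by
  rw [← algebraMap_smul C f X, M.I_smul, algebraMap_smul]
theorem J_rsmul (f : ℝ) (X : V) : M.J (f • X) = f • M.J X := by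
  rw [← algebraMap_smul C f X, M.J_smul, algebraMap_smul]
theorem g_rsmul' (f : ℝ) (X Y : V) : M.g X (f • Y) = f • M.g X Y := by
  rw [← algebraMap_smul C f Y, M.g_smul', Algebra.smul_def]

theorem xi_rot (X Y : V) : M.rot.xi X Y = M.xi X Y := by
  have h1 : M.rot.lambdaI = M.lambdaJ := rfl
  have h2 : M.rot.lambdaJ = M.lambdaK := rfl
  have h3 : M.rot.lambdaK = M.lambdaI := rfl
  unfold xi
  rw [h1, h2, h3]
  change (-(1/4 : ℝ)) • (M.J (M.nabA M.J X Y) + M.K (M.nabA M.K X Y) + M.I (M.nabA M.I X Y))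
    + (1/2 : ℝ) • (M.lambdaJ X • M.J Y + M.lambdaK X • M.K Y + M.lambdaI X • M.I Y) = _
  abel_nf

theorem xi_comm (X Y : V) : M.nabA M.I X Y = M.lambdaK X • M.J Y - M.lambdaJ X • M.K Y
    - (M.xi X (M.I Y) - M.I (M.xi X Y)) := by
  simp only [xi, nabA, M.K_def, M.I_add, M.I_sub, M.J_add, M.J_sub, M.I_neg, M.J_neg, M.I_smul,
    M.J_smul, M.I_rsmul, M.J_rsmul, M.JI, M.I_sq, M.J_sq, M.nab_neg, smul_neg]
  generalize M.lambdaI X • M.I (M.J Y) = wI0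
  generalize M.lambdaI X • M.I Y = wI1
  generalize M.lambdaI X • M.J Y = wI2
  generalize M.lambdaI X • Y = wI3
  generalize M.lambdaJ X • M.I (M.J Y) = wJ0
  generalize M.lambdaJ X • M.I Y = wJ1
  generalize M.lambdaJ X • M.J Y = wJ2
  generalize M.lambdaJ X • Y = wJ3
  generalize M.lambdaK X • M.I (M.J Y) = wK0
  generalize M.lambdaK X • M.I Y = wK1
  generalize M.lambdaK X • M.J Y = wK2
  generalize M.lambdaK X • Y = wK3
  module

theorem xi_sum (X Y : V) : M.I (M.xi X (M.I Y)) + M.J (M.xi X (M.J Y)) + M.K (M.xi X (M.K Y))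
    = M.xi X Y := by
  simp only [xi, nabA, M.K_def, M.I_add, M.I_sub, M.J_add, M.J_sub, M.I_neg, M.J_neg, M.I_smul,
    M.J_smul, M.I_rsmul, M.J_rsmul, M.JI, M.I_sq, M.J_sq, M.nab_neg]
  module

/-- the intrinsic torsion as a covariant tensor -/
noncomputable def T3 : V → V → V → C := fun X Y Z => M.g Y (M.xi X Z)

theorem nab2_I (X Y Z : V) : M.nab2 (M.omega M.I) X Y Z
    = M.lambdaK X * M.g Y (M.J Z) - M.lambdaJ X * M.g Y (M.K Z)
      - M.T3 X Y (M.I Z) - M.T3 X (M.I Y) Z := by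
  have h : M.nab2 (M.omega M.I) X Y Z = M.g Y (M.nabA M.I X Z) := by
    simp only [nab2, omega, nabA, M.nab_metric, M.g_sub']
    ring
  rw [h, M.xi_comm]
  simp only [M.g_sub', M.g_smul', T3, M.gI]
  ring

theorem nab2_J (X Y Z : V) : M.nab2 (M.omega M.J) X Y Z
    = M.lambdaI X * M.g Y (M.K Z) - M.lambdaK X * M.g Y (M.I Z)
      - M.T3 X Y (M.J Z) - M.T3 X (M.J Y) Z := by
  have h := M.rot.nab2_I X Y Z
  simp only [T3, xi_rot] at h ⊢
  exact h

theorem nab2_K (X Y Z : V) : M.nab2 (M.omega M.K) X Y Z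
    = M.lambdaJ X * M.g Y (M.I Z) - M.lambdaI X * M.g Y (M.J Z)
      - M.T3 X Y (M.K Z) - M.T3 X (M.K Y) Z := by
  have h := M.rot.rot.nab2_I X Y Z
  simp only [T3, xi_rot] at h ⊢
  exact h

/-- alternation of the algebraic part of the covariant derivative of `ω_A` -/
def cyc (A : V → V) (T : V → V → V → C) : V → V → V → C := fun X Y Z =>
  -(T X Y (A Z)) - T X (A Y) Z + T Y X (A Z) + T Y (A X) Z - T Z X (A Y) - T Z (A X) Y

theorem d2_eq (A : V → V) (hA : ∀ X Y, M.g (A X) Y = -M.g X (A Y)) (X Y Z : V) : M.d2 (M.omega A) X Y Z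
    = M.nab2 (M.omega A) X Y Z - M.nab2 (M.omega A) Y X Z + M.nab2 (M.omega A) Z X Y := by
  have hs : ∀ X Y, M.g X (A Y) = -M.g Y (A X) := fun X Y => by rw [M.g_symm, hA]
  simp only [d2, nab2, omega, ← M.torsion_free, M.g_sub]
  rw [hs X (M.nab Z Y), hs X (M.nab Y Z), hs Y (M.nab X Z)]
  ring

end conn
end AQH

namespace AQH

section beta

variable {n : ℕ} {C V : Type*} [CommRing C] [Algebra ℝ C] [AddCommGroup V] [Module C V]
  [Module ℝ V] [IsScalarTower ℝ C V]

variable (M : AQH n C V)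

theorem gK (X Y : V) : M.g (M.K X) Y = -M.g X (M.K Y) := M.rot.gJ X Y
theorem gKs (X Y : V) : M.g Y (M.K X) = -M.g X (M.K Y) := M.rot.gJs X Y

theorem d2_J (X Y Z : V) : M.d2 (M.omega M.J) X Y Z = cyc M.J M.T3 X Y Z
    + wedge12 M.lambdaI (M.omega M.K) X Y Z - wedge12 M.lambdaK (M.omega M.I) X Y Z := by
  rw [M.d2_eq M.J M.gJ]
  simp only [nab2_J, cyc, wedge12, omega]
  ring

theorem d2_K (X Y Z : V) : M.d2 (M.omega M.K) X Y Z = cyc M.K M.T3 X Y Z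
    + wedge12 M.lambdaJ (M.omega M.I) X Y Z - wedge12 M.lambdaI (M.omega M.J) X Y Z := by
  rw [M.d2_eq M.K M.gK]
  simp only [nab2_K, cyc, wedge12, omega]
  ring

theorem betaI_eq (X Y Z : V) : M.betaI X Y Z
    = act3 M.J (cyc M.J M.T3) X Y Z + act3 M.K (cyc M.K M.T3) X Y Z
      + wedge12 (act1 M.K M.lambdaI) (M.omega M.J) X Y Z
      - wedge12 (act1 M.J M.lambdaI) (M.omega M.K) X Y Z
      + (wedge12 (act1 M.J M.lambdaK) (M.omega M.I) X Y Z
      - wedge12 (act1 M.K M.lambdaJ) (M.omega M.I) X Y Z) := by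
  simp only [betaI, act3, d2_J, d2_K, wedge12, omega, act1, M.K_def, M.gI, M.gJ, M.JI, M.I_sq,
    M.J_sq, M.I_neg, M.J_neg, M.g_neg, M.g_neg', neg_neg]
  ring

theorem cyc_op23 (A B : V → V) (ψ : V → V → V → C) (h : IsAlt3 ψ) (X Y Z : V) :
    cyc A (op23 B ψ) X Y Z = -(ψ X (B Y) (B (A Z)) + ψ X (B (A Y)) (B Z)
      + ψ (B X) Y (B (A Z)) + ψ (B (A X)) Y (B Z)
      + ψ (B X) (B (A Y)) Z + ψ (B (A X)) (B Y) Z) := by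
  obtain ⟨h1, h2⟩ := h
  simp only [cyc, op23]
  rw [h1 (B X) Y, h1 (B (A X)) Y, h1 (B X) Z, h1 (B (A X)) Z, h2 _ _ Z, h2 _ _ Z]
  ring

theorem neg1 {ψ : V → V → V → C} (h : Lin3 ψ) (X Y Z : V) : ψ (-X) Y Z = -ψ X Y Z := by
  have h0 : ψ 0 Y Z = 0 := by simpa using h 1 0 0 Y Z
  simpa [h0] using h (-1) X 0 Y Z
theorem neg2 {ψ : V → V → V → C} (h : Lin3 ψ) (ha : IsAlt3 ψ) (X Y Z : V) :
    ψ X (-Y) Z = -ψ X Y Z := by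
  rw [ha.1 (-Y) X, neg1 h, ha.1 X Y]; ring
theorem neg3 {ψ : V → V → V → C} (h : Lin3 ψ) (ha : IsAlt3 ψ) (X Y Z : V) :
    ψ X Y (-Z) = -ψ X Y Z := by
  rw [ha.2 X (-Z) Y, neg2 h ha, ha.2 X Y Z]; ring

theorem b_id (A : V → V) (hA : ∀ X, A (A X) = -X) {ψ : V → V → V → C} (h : Lin3 ψ)
    (ha : IsAlt3 ψ) (X Y Z : V) : act3 A (cyc A ψ) X Y Z = -2 * calL A ψ X Y Z := by
  have h0 : ψ = op23 id ψ := rfl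
  conv_lhs => rw [h0]
  simp only [act3, cyc_op23 A id ψ ha, id, hA, calL, op12, op13, op23, neg1 h, neg2 h ha,
    neg3 h ha]
  ring

theorem b_self (A : V → V) (hA : ∀ X, A (A X) = -X) (hN : ∀ X, A (-X) = -A X) {ψ : V → V → V → C} (h : Lin3 ψ)
    (ha : IsAlt3 ψ) (X Y Z : V) : act3 A (cyc A (op23 A ψ)) X Y Z = 2 * calL A ψ X Y Z := by
  simp only [act3, cyc_op23 A A ψ ha, hA, hN, calL, op12, op13, op23, neg1 h, neg2 h ha, neg3 h ha]
  ring

/-- the symmetrised product of `I`, `J`, `K` acting in the three slots -/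
def opS (ψ : V → V → V → C) : V → V → V → C := fun X Y Z =>
  ψ (M.I X) (M.J Y) (M.K Z) + ψ (M.I X) (M.K Y) (M.J Z) + ψ (M.J X) (M.I Y) (M.K Z)
    + ψ (M.J X) (M.K Y) (M.I Z) + ψ (M.K X) (M.I Y) (M.J Z) + ψ (M.K X) (M.J Y) (M.I Z)

theorem K_sq (X : V) : M.K (M.K X) = -X := M.rot.J_sq X

theorem b_JI {ψ : V → V → V → C} (h : Lin3 ψ) (ha : IsAlt3 ψ)
    (X Y Z : V) : act3 M.J (cyc M.J (op23 M.I ψ)) X Y Z = -M.opS ψ X Y Z := by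
  simp only [act3, cyc_op23 _ _ ψ ha, opS, neg1 h, neg2 h ha, neg3 h ha, M.K_def, M.JI, M.I_sq,
    M.J_sq, M.I_neg, M.J_neg, neg_neg]
  ring
theorem b_KI {ψ : V → V → V → C} (h : Lin3 ψ) (ha : IsAlt3 ψ)
    (X Y Z : V) : act3 M.K (cyc M.K (op23 M.I ψ)) X Y Z = M.opS ψ X Y Z := by
  simp only [act3, cyc_op23 _ _ ψ ha, opS, neg1 h, neg2 h ha, neg3 h ha, M.K_def, M.JI, M.I_sq,
    M.J_sq, M.I_neg, M.J_neg, neg_neg]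
  ring
theorem b_KJ {ψ : V → V → V → C} (h : Lin3 ψ) (ha : IsAlt3 ψ)
    (X Y Z : V) : act3 M.K (cyc M.K (op23 M.J ψ)) X Y Z = -M.opS ψ X Y Z := by
  simp only [act3, cyc_op23 _ _ ψ ha, opS, neg1 h, neg2 h ha, neg3 h ha, M.K_def, M.JI, M.I_sq,
    M.J_sq, M.I_neg, M.J_neg, neg_neg]
  ring
theorem b_JK {ψ : V → V → V → C} (h : Lin3 ψ) (ha : IsAlt3 ψ)
    (X Y Z : V) : act3 M.J (cyc M.J (op23 M.K ψ)) X Y Z = M.opS ψ X Y Z := by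
  simp only [act3, cyc_op23 _ _ ψ ha, opS, neg1 h, neg2 h ha, neg3 h ha, M.K_def, M.JI, M.I_sq,
    M.J_sq, M.I_neg, M.J_neg, neg_neg]
  ring
theorem L_JK {ψ : V → V → V → C} (h : Lin3 ψ) (ha : IsAlt3 ψ)
    (X Y Z : V) : calL M.J (calL M.K ψ) X Y Z = calL M.I ψ X Y Z - M.opS ψ X Y Z := by
  simp only [calL, op12, op13, op23, opS, neg1 h, neg2 h ha, neg3 h ha, M.K_def, M.JI, M.I_sq,
    M.J_sq, M.I_neg, M.J_neg, neg_neg]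
  ring
theorem L_KJ {ψ : V → V → V → C} (h : Lin3 ψ) (ha : IsAlt3 ψ)
    (X Y Z : V) : calL M.K (calL M.J ψ) X Y Z = calL M.I ψ X Y Z + M.opS ψ X Y Z := by
  simp only [calL, op12, op13, op23, opS, neg1 h, neg2 h ha, neg3 h ha, M.K_def, M.JI, M.I_sq,
    M.J_sq, M.I_neg, M.J_neg, neg_neg]
  ring
theorem L_JI_KI {ψ : V → V → V → C} (h : Lin3 ψ) (ha : IsAlt3 ψ)
    (X Y Z : V) : calL M.J (calL M.I ψ) X Y Z + calL M.K (calL M.I ψ) X Y Z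
    = calL M.J ψ X Y Z + calL M.K ψ X Y Z := by
  simp only [calL, op12, op13, op23, opS, neg1 h, neg2 h ha, neg3 h ha, M.K_def, M.JI, M.I_sq,
    M.J_sq, M.I_neg, M.J_neg, neg_neg]
  ring
theorem L_II {ψ : V → V → V → C} (h : Lin3 ψ) (ha : IsAlt3 ψ)
    (X Y Z : V) :
    calL M.I (calL M.I ψ) X Y Z = 3 * ψ X Y Z - 2 * calL M.I ψ X Y Z := by
  simp only [calL, op12, op13, op23, neg1 h, neg2 h ha, neg3 h ha, M.I_sq, neg_neg]
  ring

end beta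

section epart

variable {n : ℕ} {C V : Type*} [CommRing C] [Algebra ℝ C] [AddCommGroup V] [Module C V]
  [Module ℝ V] [IsScalarTower ℝ C V]

variable (M : AQH n C V)

/-- the `E`-part of the torsion -/
def etens (s : C) (aI aJ aK θ : V → C) : V → V → V → C := fun X Y Z =>
  (wedge12 (act1 M.I aI) (M.omega M.I) X Y Z - (1 - s) * (act1 M.I aI X * M.omega M.I Y Z))
  + (wedge12 (act1 M.J aJ) (M.omega M.J) X Y Z - (1 - s) * (act1 M.J aJ X * M.omega M.J Y Z))
  + (wedge12 (act1 M.K aK) (M.omega M.K) X Y Z - (1 - s) * (act1 M.K aK X * M.omega M.K Y Z))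
  + 3 * (M.g X Y * θ Z - M.g X Z * θ Y)
  - ((M.g (M.I X) Y * act1 M.I θ Z - M.g (M.I X) Z * act1 M.I θ Y)
    + (M.g (M.J X) Y * act1 M.J θ Z - M.g (M.J X) Z * act1 M.J θ Y)
    + (M.g (M.K X) Y * act1 M.K θ Z - M.g (M.K X) Z * act1 M.K θ Y))
  - 2 * s * (act1 M.I θ X * M.omega M.I Y Z + act1 M.J θ X * M.omega M.J Y Z
      + act1 M.K θ X * M.omega M.K Y Z)

theorem b_E (s : C) (aI aJ aK θ : V → C) (hI : Lin1 aI) (hJ : Lin1 aJ) (hK : Lin1 aK)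
    (hθ : Lin1 θ) (hsum : ∀ X, aI X + aJ X + aK X = 0) (X Y Z : V) :
    act3 M.J (cyc M.J (M.etens s aI aJ aK θ)) X Y Z
      + act3 M.K (cyc M.K (M.etens s aI aJ aK θ)) X Y Z
    = -(2 + 2 * s) * (wedge12 (act1 M.J aI) (M.omega M.J) X Y Z
        + wedge12 (act1 M.K aI) (M.omega M.K) X Y Z)
      + (6 + 2 * s) * wedge12 (act1 M.I aI) (M.omega M.I) X Y Z
      + 8 * s * wedge12 (act1 M.I θ) (M.omega M.I) X Y Z
      - (8 - 4 * s) * (wedge12 (act1 M.J θ) (M.omega M.J) X Y Z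
        + wedge12 (act1 M.K θ) (M.omega M.K) X Y Z) := by
  have hk : ∀ X, aK X = -aI X - aJ X := fun X => by linear_combination hsum X
  have gXY := M.g_symm Y X
  have gXZ := M.g_symm Z X
  have gYZ := M.g_symm Z Y
  simp only [act3, cyc, etens, wedge12, omega, act1, M.K_def, M.gI, M.gJ, M.JI, M.I_sq,
    M.J_sq, M.I_neg, M.J_neg, M.g_neg, M.g_neg', neg_neg, lin1_neg hI, lin1_neg hJ, lin1_neg hθ,
    hk, M.gIs X Y, M.gIs X Z, M.gIs Y Z, M.gJs X Y, M.gJs X Z, M.gJs Y Z,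
    M.gIJs X Y, M.gIJs X Z, M.gIJs Y Z, gXY, gXZ, gYZ]
  ring

end epart
end AQH

namespace AQH

section lam

variable {n : ℕ} {C V : Type*} [CommRing C] [Algebra ℝ C] [AddCommGroup V] [Module C V]
  [Module ℝ V] [IsScalarTower ℝ C V]

variable (M : AQH n C V)

theorem K_neg (X : V) : M.K (-X) = -M.K X := M.rot.J_neg X

theorem zero_of_neg {x : C} (h : x = -x) : x = 0 := by
  have h2 : (2 : ℝ) • x = 0 := by
    rw [two_smul]; nth_rewrite 2 [h]; simp
  calc x = (1/2 : ℝ) • ((2 : ℝ) • x) := by rw [smul_smul]; norm_num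
    _ = 0 := by rw [h2, smul_zero]

theorem lin1_frame' {ν : V → C} (h : Lin1 ν) (X : V) :
    ∑ i, ν (M.frame i) * M.g (M.frame i) X = ν X := by
  rw [← M.lin1_frame h X]
  exact Finset.sum_congr rfl fun i _ => by rw [M.g_symm, mul_comm]

theorem lam_wedge (A B : V → V) (hA : ∀ X Y, M.g (A X) Y = -M.g X (A Y))
    (hB : ∀ X Y, M.g (B X) Y = -M.g X (B Y))
    (hBl : ∀ (f : C) X Y, B (f • X + Y) = f • B X + B Y) {ν : V → C} (h : Lin1 ν) (X : V) :
    M.Lam B (wedge12 ν (M.omega A)) X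
      = (1/2 : ℝ) • (ν X * ∑ j, M.g (A (M.frame j)) (B (M.frame j))) + ν (B (A X)) := by
  have h1 : ∑ i, ∑ j, M.g (M.frame i) (A (M.frame j)) * M.g (M.frame i) (B (M.frame j))
      = ∑ j, M.g (A (M.frame j)) (B (M.frame j)) := by
    rw [Finset.sum_comm]
    refine Finset.sum_congr rfl fun j _ => ?_
    rw [← M.g_frame (A (M.frame j))]
    exact Finset.sum_congr rfl fun i _ => by rw [M.g_symm (M.frame i)]
  have h2 : ∑ i, ∑ j, ν (M.frame i) * M.g X (A (M.frame j)) * M.g (M.frame i) (B (M.frame j))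
      = -ν (B (A X)) := by
    rw [Finset.sum_comm]
    have e : ∀ j, ∑ i, ν (M.frame i) * M.g X (A (M.frame j)) * M.g (M.frame i) (B (M.frame j))
        = -(M.g (A X) (M.frame j) * ν (B (M.frame j))) := fun j => by
      rw [← M.lin1_frame' h (B (M.frame j)), hA, Finset.mul_sum, ← Finset.sum_neg_distrib]
      exact Finset.sum_congr rfl fun i _ => by ring
    simp only [e, Finset.sum_neg_distrib]
    have hl : Lin1 (fun X => ν (B X)) := fun f X Y => by simp only [hBl, h f]
    rw [M.lin1_frame hl]
  have h3 : ∑ i, ∑ j, ν (M.frame j) * M.g X (A (M.frame i)) * M.g (M.frame i) (B (M.frame j))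
      = ν (B (A X)) := by
    rw [Finset.sum_comm]
    have e : ∀ j, ∑ i, ν (M.frame j) * M.g X (A (M.frame i)) * M.g (M.frame i) (B (M.frame j))
        = M.g (B (A X)) (M.frame j) * ν (M.frame j) := fun j => by
      rw [hB, ← M.g_frame (A X) (B (M.frame j)), ← Finset.sum_neg_distrib, Finset.sum_mul]
      exact Finset.sum_congr rfl fun i _ => by rw [hA]; ring
    simp only [e]
    rw [M.lin1_frame h]
  have h4 : ∑ i, ∑ j, wedge12 ν (M.omega A) X (M.frame i) (M.frame j)
        * M.omega B (M.frame i) (M.frame j)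
      = ν X * ∑ j, M.g (A (M.frame j)) (B (M.frame j)) + 2 * ν (B (A X)) := by
    rw [← h1]
    have : 2 * ν (B (A X)) = -(-ν (B (A X))) + ν (B (A X)) := by ring
    rw [this, ← h2]
    rw [← h3]
    simp only [Finset.mul_sum, ← Finset.sum_neg_distrib, ← Finset.sum_add_distrib, wedge12, omega]
    exact Finset.sum_congr rfl fun i _ => Finset.sum_congr rfl fun j _ => by ring
  rw [Lam, h4]
  algebra

theorem tr_one (A : V → V) (hA : ∀ X Y, M.g (A X) (A Y) = M.g X Y) :
    ∑ j, M.g (A (M.frame j)) (A (M.frame j)) = (4 * (n : ℝ)) • (1 : C) := by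
  simp only [hA, M.frame_orthonormal]
  simp [Algebra.smul_def]
  rw [map_ofNat]

theorem tr_IJ : ∑ j, M.g (M.I (M.frame j)) (M.J (M.frame j)) = 0 := by
  refine Finset.sum_eq_zero fun j _ => ?_
  apply zero_of_neg
  conv_lhs => rw [M.gI, M.gIJs]
  rw [M.gI]

theorem tr_symm (A B : V → V) (h : ∑ j, M.g (A (M.frame j)) (B (M.frame j)) = 0) :
    ∑ j, M.g (B (M.frame j)) (A (M.frame j)) = 0 := by
  rw [← h]; exact Finset.sum_congr rfl fun i _ => M.g_symm _ _

theorem K_metric (X Y : V) : M.g (M.K X) (M.K Y) = M.g X Y := M.rot.J_metric X Y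

theorem lam_eq (A : V → V) {β : V → V → V → C} (h : ∀ X Z, Lin1 (fun Y => β X Y Z)) (X : V) :
    M.Lam A β X = (1/2 : ℝ) • ∑ j, β X (A (M.frame j)) (M.frame j) := by
  rw [Lam, Finset.sum_comm]
  congr 1
  exact Finset.sum_congr rfl fun j _ => M.lin1_frame' (h X (M.frame j)) _

theorem tr_swap (A : V → V) (hA : ∀ X Y, M.g (A X) Y = -M.g X (A Y)) {F : V → V → C}
    (h1 : ∀ Y, Lin1 (fun X => F X Y)) (h2 : ∀ X, Lin1 (fun Y => F X Y)) :
    ∑ j, F (M.frame j) (A (M.frame j)) = -∑ j, F (A (M.frame j)) (M.frame j) := by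
  have e1 : ∀ j, F (M.frame j) (A (M.frame j))
      = ∑ i, M.g (A (M.frame j)) (M.frame i) * F (M.frame j) (M.frame i) := fun j =>
    (M.lin1_frame (h2 (M.frame j)) _).symm
  have e2 : ∀ i, F (A (M.frame i)) (M.frame i)
      = ∑ j, F (M.frame j) (M.frame i) * M.g (M.frame j) (A (M.frame i)) := fun i =>
    (M.lin1_frame' (h1 (M.frame i)) _).symm
  simp only [e1, e2]
  rw [Finset.sum_comm, ← Finset.sum_neg_distrib]
  refine Finset.sum_congr rfl fun i _ => ?_
  rw [← Finset.sum_neg_distrib]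
  exact Finset.sum_congr rfl fun j _ => by rw [hA]; ring

theorem lin_2 {ψ : V → V → V → C} (h : Lin3 ψ) (ha : IsAlt3 ψ) (X Z : V) :
    Lin1 (fun Y => ψ X Y Z) := fun f Y Y' => by
  simp only [ha.1 _ X Z, h f]; ring
theorem lin_3 {ψ : V → V → V → C} (h : Lin3 ψ) (ha : IsAlt3 ψ) (X Y : V) :
    Lin1 (fun Z => ψ X Y Z) := fun f Z Z' => by
  simp only [ha.2 X _ Y, lin_2 h ha X Y f Z Z']; ring

theorem lin_calL_2 {ψ : V → V → V → C} (h : Lin3 ψ) (ha : IsAlt3 ψ) (X Z : V) :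
    Lin1 (fun Y => calL M.I ψ X Y Z) := fun f Y Y' => by
  have h2 := fun X Z => lin_2 h ha X Z f
  simp only at h2
  simp only [calL, op12, op13, op23, M.I_lin, h2]
  ring

theorem sum_zero_of_lam {A : V → V} {ψ : V → V → V → C} (h : Lin3 ψ) (ha : IsAlt3 ψ)
    (hl : M.Lam A ψ = 0) (X : V) : ∑ j, ψ X (A (M.frame j)) (M.frame j) = 0 := by
  have e := M.lam_eq A (lin_2 h ha) X
  rw [hl] at e
  calc _ = (2 : ℝ) • ((1/2 : ℝ) • ∑ j, ψ X (A (M.frame j)) (M.frame j)) := by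
        rw [smul_smul]; norm_num
    _ = 0 := by rw [← e]; simp

theorem alt_self {ψ : V → V → V → C} (ha : IsAlt3 ψ) (X Y : V) : ψ X Y Y = 0 :=
  zero_of_neg (ha.2 X Y Y)

theorem lam_calL_I {ψ : V → V → V → C} (h : Lin3 ψ) (ha : IsAlt3 ψ)
    (hI : M.Lam M.I ψ = 0) (X : V) : M.Lam M.I (calL M.I ψ) X = 0 := by
  rw [M.lam_eq M.I (M.lin_calL_2 h ha)]
  simp only [calL, op12, op13, op23, M.I_sq, neg2 h ha, alt_self ha, Finset.sum_add_distrib,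
    Finset.sum_neg_distrib]
  rw [M.tr_swap M.I M.gI (F := fun a b => ψ X a b) (fun Y => lin_2 h ha X Y)
    (fun Y => lin_3 h ha X Y), M.sum_zero_of_lam h ha hI]
  simp

theorem lam_calL_J {ψ : V → V → V → C} (h : Lin3 ψ) (ha : IsAlt3 ψ)
    (hJ : M.Lam M.J ψ = 0) (hK : M.Lam M.K ψ = 0) (X : V) : M.Lam M.J (calL M.I ψ) X = 0 := by
  have hc : ∀ (W Z : V) (B : V → V) (hB : ∀ (f : C) X Y, B (f • X + Y) = f • B X + B Y),
      Lin1 (fun Y => ψ W (B Y) Z) := fun W Z B hB f Y Y' => by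
    simp only [hB]; exact lin_2 h ha W Z f _ _
  rw [M.lam_eq M.J (M.lin_calL_2 h ha)]
  simp only [calL, op12, op13, op23, Finset.sum_add_distrib]
  have h1 := M.sum_zero_of_lam h ha hK (M.I X)
  have h2 := M.sum_zero_of_lam h ha hJ X
  have e1 := M.tr_swap M.I M.gI (F := fun a b => ψ (M.I X) (M.J a) b)
    (fun Y => hc _ _ _ M.J_lin) (fun Y => lin_3 h ha _ _)
  have e2 := M.tr_swap M.I M.gI (F := fun a b => ψ X (M.K a) b)
    (fun Y => hc _ _ _ M.K_lin) (fun Y => lin_3 h ha _ _)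
  simp only [M.K_def, M.JI, M.I_sq, M.I_neg, neg_neg, neg2 h ha, Finset.sum_neg_distrib]
    at h1 h2 e1 e2
  rw [e1, e2, h1, h2]
  simp

theorem lin_lambda (A B : V → V) (hA : ∀ (f : C) X Y, A (f • X + Y) = f • A X + A Y) :
    Lin1 (fun X => (1/(2*(n:ℝ))) • M.inner2 (fun Y Z => M.nab2 (M.omega A) X Y Z) (M.omega B)) := by
  intro f X X'
  have e : ∀ Y Z, M.nab2 (M.omega A) (f • X + X') Y Z = f * M.nab2 (M.omega A) X Y Z
      + M.nab2 (M.omega A) X' Y Z := fun Y Z => by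
    simp only [nab2, omega, M.D_addX, M.D_smulX, M.nab_addX, M.nab_smulX, hA, M.g_add, M.g_smul,
      M.g_add', M.g_smul']
    ring
  simp only [inner2, e, add_mul, Finset.sum_add_distrib, mul_assoc, ← Finset.mul_sum]
  algebra

end lam
end AQH

namespace AQH

section main

variable {n : ℕ} {C V : Type*} [CommRing C] [Algebra ℝ C] [AddCommGroup V] [Module C V]
  [Module ℝ V] [IsScalarTower ℝ C V]

variable (M : AQH n C V)

theorem lin_lambdaI : Lin1 M.lambdaI := M.lin_lambda M.J M.K M.J_lin
theorem lin_lambdaJ : Lin1 M.lambdaJ := M.lin_lambda M.K M.I M.K_lin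
theorem lin_lambdaK : Lin1 M.lambdaK := M.lin_lambda M.I M.J M.I_lin

theorem lin_act1 {A : V → V} (hA : ∀ (f : C) X Y, A (f • X + Y) = f • A X + A Y) {ν : V → C}
    (h : Lin1 ν) : Lin1 (act1 A ν) := fun f X X' => by
  simp only [act1, hA, h f]; ring

/-- consequences of a decomposition of `β_I` into a trace-free part and wedge products -/
theorem nu_of_dec (hn : 1 < n) {P : V → V → V → C} {p ν : V → C} (hp : Lin1 p) (hν : Lin1 ν)
    (hPI : ∀ X, M.Lam M.I P X = 0) (hPJ : ∀ X, M.Lam M.J P X = 0)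
    (hβ : ∀ X Y Z, M.betaI X Y Z = P X Y Z + wedge12 p (M.omega M.I) X Y Z
      + (-(1/2 : ℝ)) • wedge12 (act1 M.J ν) (M.omega M.J) X Y Z
      + (-(1/2 : ℝ)) • wedge12 (act1 M.K ν) (M.omega M.K) X Y Z) :
    (∀ X, M.nu3I X = ν X) ∧ (∀ X Y Z, M.beta3KI X Y Z = P X Y Z) := by
  have hlam : ∀ B X, M.Lam B M.betaI X = M.Lam B P X + M.Lam B (wedge12 p (M.omega M.I)) X
      + (-(1/2 : ℝ)) • M.Lam B (wedge12 (act1 M.J ν) (M.omega M.J)) X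
      + (-(1/2 : ℝ)) • M.Lam B (wedge12 (act1 M.K ν) (M.omega M.K)) X := by
    intro B X
    simp only [Lam, hβ, add_mul, Finset.sum_add_distrib, smul_mul_assoc, ← Finset.smul_sum]
    module
  have hνJ := lin_act1 M.J_lin hν
  have hνK := lin_act1 M.K_lin hν
  have tII := M.tr_one M.I M.I_metric
  have tJJ := M.tr_one M.J M.J_metric
  have tIJ := M.tr_IJ
  have tJI := M.tr_symm M.I M.J tIJ
  have tJK : ∑ j, M.g (M.J (M.frame j)) (M.K (M.frame j)) = 0 := M.rot.tr_IJ
  have tKJ := M.tr_symm M.J M.K tJK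
  have tKI : ∑ j, M.g (M.K (M.frame j)) (M.I (M.frame j)) = 0 := M.rot.rot.tr_IJ
  have hr : (n : ℝ) - 1 ≠ 0 := by
    have : (1 : ℝ) < n := by exact_mod_cast hn
    linarith
  have hr1 : 2 * (n : ℝ) - 1 ≠ 0 := by
    have : (1 : ℝ) < n := by exact_mod_cast hn
    linarith
  have hr2 : 2 * (n : ℝ) + 1 ≠ 0 := by positivity
  have hLI : ∀ X, M.Lam M.I M.betaI X = (2 * (n : ℝ) - 1) • p X + ν (M.I X) := by
    intro X
    rw [hlam, hPI, M.lam_wedge _ _ M.gI M.gI M.I_lin hp, M.lam_wedge _ _ M.gJ M.gI M.I_lin hνJ,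
      M.lam_wedge _ _ M.gK M.gI M.I_lin hνK, tII, tJI, tKI]
    simp only [act1, M.K_def, M.JI, M.I_sq, M.J_sq, M.I_neg, M.J_neg, neg_neg, lin1_neg hp,
      lin1_neg hν]
    algebra
  have hLJ : ∀ X, M.Lam M.J M.betaI X = -p (M.I (M.J X)) + (n : ℝ) • ν (M.J X) := by
    intro X
    rw [hlam, hPJ, M.lam_wedge _ _ M.gI M.gJ M.J_lin hp, M.lam_wedge _ _ M.gJ M.gJ M.J_lin hνJ,
      M.lam_wedge _ _ M.gK M.gJ M.J_lin hνK, tJJ, tIJ, tKJ]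
    simp only [act1, M.K_def, M.JI, M.I_sq, M.J_sq, M.I_neg, M.J_neg, neg_neg, lin1_neg hp,
      lin1_neg hν]
    algebra
  have h4 : ∀ X, M.nu4I X = (-(2 * (n : ℝ) - 1)) • p (M.I X) + ν X := by
    intro X
    simp only [nu4I, act1, hLI, M.I_sq, lin1_neg hν]
    module
  have h3 : ∀ X, M.nu3I X = ν X := by
    intro X
    simp only [nu3I, act1, hLJ, h4, M.J_sq, M.I_neg, lin1_neg hν, lin1_neg hp]
    match_scalars <;> field_simp <;> ring
  refine ⟨h3, fun X Y Z => ?_⟩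
  have h3' : M.nu3I = ν := funext h3
  have h4' : ∀ X, act1 M.I M.nu4I X = (-(2 * (n : ℝ) - 1)) • p X + act1 M.I ν X := by
    intro X
    simp only [act1, h4, M.I_sq, lin1_neg hp]
    module
  have h5 : M.beta4I X Y Z = wedge12 p (M.omega M.I) X Y Z
      + (-(1/(2*(n:ℝ)-1))) • wedge12 (act1 M.I ν) (M.omega M.I) X Y Z := by
    simp only [beta4I, wedge12, h4', add_mul, smul_mul_assoc]
    match_scalars <;> field_simp
  rw [beta3KI, h5, betaE3I, hβ, h3']
  module

/-- the decomposition data of the intrinsic torsion -/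
structure Dec (M : AQH n C V) (s : C) (ψ ψI ψJ ψK κ κI κJ κK : V → V → V → C)
    (aI aJ aK θ : V → C) : Prop where
  T_eq : ∀ X Y Z, M.T3 X Y Z = ψ X Y Z
    + (op23 M.I ψI X Y Z + op23 M.J ψJ X Y Z + op23 M.K ψK X Y Z)
    + (3 * κ X Y Z - (op23 M.I κ X Y Z + op23 M.J κ X Y Z + op23 M.K κ X Y Z))
    + (op23 M.I κI X Y Z + op23 M.J κJ X Y Z + op23 M.K κK X Y Z)
    + M.etens s aI aJ aK θ X Y Z
  lin : Lin3 ψ ∧ Lin3 ψI ∧ Lin3 ψJ ∧ Lin3 ψK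
  alt : IsAlt3 ψ ∧ IsAlt3 ψI ∧ IsAlt3 ψJ ∧ IsAlt3 ψK
  cas : ∀ X Y Z, calL M.I ψ X Y Z + calL M.J ψ X Y Z + calL M.K ψ X Y Z = -(3 * ψ X Y Z)
  casI : ∀ X Y Z, calL M.I ψI X Y Z + calL M.J ψI X Y Z + calL M.K ψI X Y Z = -(3 * ψI X Y Z)
  casJ : ∀ X Y Z, calL M.I ψJ X Y Z + calL M.J ψJ X Y Z + calL M.K ψJ X Y Z = -(3 * ψJ X Y Z)
  casK : ∀ X Y Z, calL M.I ψK X Y Z + calL M.J ψK X Y Z + calL M.K ψK X Y Z = -(3 * ψK X Y Z)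
  lam : M.Lam M.I ψ = 0 ∧ M.Lam M.J ψ = 0 ∧ M.Lam M.K ψ = 0
  lamI : M.Lam M.I ψI = 0 ∧ M.Lam M.J ψI = 0 ∧ M.Lam M.K ψI = 0
  lamJ : M.Lam M.I ψJ = 0 ∧ M.Lam M.J ψJ = 0 ∧ M.Lam M.K ψJ = 0
  lamK : M.Lam M.I ψK = 0 ∧ M.Lam M.J ψK = 0 ∧ M.Lam M.K ψK = 0
  typI : calL M.I ψI = ψI
  typJ : calL M.J ψJ = ψJ
  typK : calL M.K ψK = ψK
  sum : ∀ X Y Z, ψI X Y Z + ψJ X Y Z + ψK X Y Z = 0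
  ksum : ∀ X Y Z, κI X Y Z + κJ X Y Z + κK X Y Z = 0
  kap : M.InKH3 κ
  kapI : M.InKH3 κI
  kapJ : M.InKH3 κJ
  kapK : M.InKH3 κK
  linI : Lin1 aI
  linJ : Lin1 aJ
  linK : Lin1 aK
  linθ : Lin1 θ
  asum : ∀ X, aI X + aJ X + aK X = 0

variable {M} {s : C} {ψ ψI ψJ ψK κ κI κJ κK : V → V → V → C} {aI aJ aK θ : V → C}

theorem InKH3.rot {κ : V → V → V → C} (h : M.InKH3 κ) : M.rot.InKH3 κ :=
  ⟨h.1, h.2.1, h.2.2.2.1, h.2.2.2.2.1, h.2.2.1, h.2.2.2.2.2.2.1, h.2.2.2.2.2.2.2, h.2.2.2.2.2.1⟩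

theorem Dec.rot (h : M.Dec s ψ ψI ψJ ψK κ κI κJ κK aI aJ aK θ) :
    M.rot.Dec s ψ ψJ ψK ψI κ κJ κK κI aJ aK aI θ where
  T_eq X Y Z := by
    have e : M.rot.T3 X Y Z = M.T3 X Y Z := by
      simp only [T3, xi_rot]; rfl
    rw [e, h.T_eq]
    change _ = ψ X Y Z
      + (op23 M.J ψJ X Y Z + op23 M.K ψK X Y Z + op23 M.I ψI X Y Z)
      + (3 * κ X Y Z - (op23 M.J κ X Y Z + op23 M.K κ X Y Z + op23 M.I κ X Y Z))
      + (op23 M.J κJ X Y Z + op23 M.K κK X Y Z + op23 M.I κI X Y Z)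
      + ((wedge12 (act1 M.J aJ) (M.omega M.J) X Y Z - (1 - s) * (act1 M.J aJ X * M.omega M.J Y Z))
      + (wedge12 (act1 M.K aK) (M.omega M.K) X Y Z - (1 - s) * (act1 M.K aK X * M.omega M.K Y Z))
      + (wedge12 (act1 M.I aI) (M.omega M.I) X Y Z - (1 - s) * (act1 M.I aI X * M.omega M.I Y Z))
      + 3 * (M.g X Y * θ Z - M.g X Z * θ Y)
      - ((M.g (M.J X) Y * act1 M.J θ Z - M.g (M.J X) Z * act1 M.J θ Y)
        + (M.g (M.K X) Y * act1 M.K θ Z - M.g (M.K X) Z * act1 M.K θ Y)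
        + (M.g (M.I X) Y * act1 M.I θ Z - M.g (M.I X) Z * act1 M.I θ Y))
      - 2 * s * (act1 M.J θ X * M.omega M.J Y Z + act1 M.K θ X * M.omega M.K Y Z
          + act1 M.I θ X * M.omega M.I Y Z))
    rw [etens]
    ring
  lin := ⟨h.lin.1, h.lin.2.2.1, h.lin.2.2.2, h.lin.2.1⟩
  alt := ⟨h.alt.1, h.alt.2.2.1, h.alt.2.2.2, h.alt.2.1⟩
  cas X Y Z := by rw [← h.cas]; simp only [AQH.rot]; ring
  casI X Y Z := by rw [← h.casJ]; simp only [AQH.rot]; ring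
  casJ X Y Z := by rw [← h.casK]; simp only [AQH.rot]; ring
  casK X Y Z := by rw [← h.casI]; simp only [AQH.rot]; ring
  lam := ⟨h.lam.2.1, h.lam.2.2, h.lam.1⟩
  lamI := ⟨h.lamJ.2.1, h.lamJ.2.2, h.lamJ.1⟩
  lamJ := ⟨h.lamK.2.1, h.lamK.2.2, h.lamK.1⟩
  lamK := ⟨h.lamI.2.1, h.lamI.2.2, h.lamI.1⟩
  typI := h.typJ
  typJ := h.typK
  typK := h.typI
  sum X Y Z := by rw [← h.sum X Y Z]; ring
  ksum X Y Z := by rw [← h.ksum X Y Z]; ring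
  kap := h.kap.rot
  kapI := h.kapJ.rot
  kapJ := h.kapK.rot
  kapK := h.kapI.rot
  linI := h.linJ
  linJ := h.linK
  linK := h.linI
  linθ := h.linθ
  asum X := by rw [← h.asum X]; ring

theorem opS_KH {κ : V → V → V → C} (h : M.InKH3 κ) (X Y Z : V) : M.opS κ X Y Z = 0 := by
  obtain ⟨ha, hl, hI, hJ, hK, -⟩ := h
  have e := M.L_JK hl ha X Y Z
  rw [hK, hJ, hI] at e
  linear_combination e

theorem Dec.betaI (h : M.Dec s ψ ψI ψJ ψK κ κI κJ κK aI aJ aK θ) (X Y Z : V) :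
    M.betaI X Y Z = (6 * ψ X Y Z + 2 * calL M.I ψ X Y Z - 8 * ψI X Y Z
        - 16 * κ X Y Z - 2 * κI X Y Z)
      + wedge12 (fun W => (6 + 2 * s) * act1 M.I aI W + 8 * s * act1 M.I θ W
          + act1 M.J M.lambdaK W - act1 M.K M.lambdaJ W) (M.omega M.I) X Y Z
      + (-(1/2 : ℝ)) • wedge12 (act1 M.J (fun W => 2 * act1 M.I M.lambdaI W + (4 + 4 * s) * aI W
          + (16 - 8 * s) * θ W)) (M.omega M.J) X Y Z
      + (-(1/2 : ℝ)) • wedge12 (act1 M.K (fun W => 2 * act1 M.I M.lambdaI W + (4 + 4 * s) * aI W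
          + (16 - 8 * s) * θ W)) (M.omega M.K) X Y Z := by
  obtain ⟨l, lI, lJ, lK⟩ := h.lin
  obtain ⟨a, bI, bJ, bK⟩ := h.alt
  have hT : M.T3 = fun X Y Z => ψ X Y Z
    + (op23 M.I ψI X Y Z + op23 M.J ψJ X Y Z + op23 M.K ψK X Y Z)
    + (3 * κ X Y Z - (op23 M.I κ X Y Z + op23 M.J κ X Y Z + op23 M.K κ X Y Z))
    + (op23 M.I κI X Y Z + op23 M.J κJ X Y Z + op23 M.K κK X Y Z)
    + M.etens s aI aJ aK θ X Y Z := by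
    funext X Y Z; exact h.T_eq X Y Z
  have hc : ∀ A : V → V, act3 A (cyc A M.T3) X Y Z = act3 A (cyc A ψ) X Y Z
    + (act3 A (cyc A (op23 M.I ψI)) X Y Z + act3 A (cyc A (op23 M.J ψJ)) X Y Z
      + act3 A (cyc A (op23 M.K ψK)) X Y Z)
    + (3 * act3 A (cyc A κ) X Y Z - (act3 A (cyc A (op23 M.I κ)) X Y Z
      + act3 A (cyc A (op23 M.J κ)) X Y Z + act3 A (cyc A (op23 M.K κ)) X Y Z))
    + (act3 A (cyc A (op23 M.I κI)) X Y Z + act3 A (cyc A (op23 M.J κJ)) X Y Z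
      + act3 A (cyc A (op23 M.K κK)) X Y Z)
    + act3 A (cyc A (M.etens s aI aJ aK θ)) X Y Z := by
    intro A
    rw [hT]
    simp only [act3, cyc]
    ring
  have hE := M.b_E s aI aJ aK θ h.linI h.linJ h.linK h.linθ h.asum X Y Z
  obtain ⟨ka, kl, kI, kJ, kK, -⟩ := h.kap
  obtain ⟨kIa, kIl, kII, kIJ, kIK, -⟩ := h.kapI
  obtain ⟨kJa, kJl, kJI, kJJ, kJK, -⟩ := h.kapJ
  obtain ⟨kKa, kKl, kKI, kKJ, kKK, -⟩ := h.kapK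
  have ksum : κI X Y Z + κJ X Y Z + κK X Y Z = 0 := h.ksum X Y Z
  -- the `S`-terms
  have s1 := M.L_JK lK bK X Y Z
  have s2 := M.L_KJ lJ bJ X Y Z
  rw [h.typK] at s1
  rw [h.typJ] at s2
  have hs : ∀ A : V → V, calL A ψI X Y Z + calL A ψJ X Y Z + calL A ψK X Y Z = 0 := fun A => by
    simp only [calL, op12, op13, op23]
    linear_combination h.sum (A X) (A Y) Z + h.sum (A X) Y (A Z) + h.sum X (A Y) (A Z)
  have t1 := hs M.I
  have t2 := hs M.J
  have t3 := hs M.K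
  rw [h.typI] at t1
  rw [h.typJ] at t2
  rw [h.typK] at t3
  have c0 := h.cas X Y Z
  have cI := h.casI X Y Z
  rw [h.typI] at cI
  have hsum := h.sum X Y Z
  rw [betaI_eq, hc, hc, b_id _ M.J_sq l a, b_id _ M.K_sq l a,
    b_id _ M.J_sq kl ka, b_id _ M.K_sq kl ka,
    M.b_JI lI bI, M.b_KI lI bI, M.b_KJ lJ bJ, M.b_JK lK bK,
    b_self _ M.J_sq M.J_neg lJ bJ, b_self _ M.K_sq M.K_neg lK bK,
    M.b_JI kl ka, M.b_KI kl ka, M.b_KJ kl ka, M.b_JK kl ka,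
    b_self _ M.J_sq M.J_neg kl ka, b_self _ M.K_sq M.K_neg kl ka,
    M.b_JI kIl kIa, M.b_KI kIl kIa, M.b_KJ kJl kJa, M.b_JK kKl kKa,
    b_self _ M.J_sq M.J_neg kJl kJa, b_self _ M.K_sq M.K_neg kKl kKa,
    kJ, kK, kJJ, kKK, h.typJ, h.typK, opS_KH h.kapJ, opS_KH h.kapK]
  have hwI : wedge12 (fun W => (6 + 2 * s) * act1 M.I aI W + 8 * s * act1 M.I θ W
          + act1 M.J M.lambdaK W - act1 M.K M.lambdaJ W) (M.omega M.I) X Y Z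
      = (6 + 2 * s) * wedge12 (act1 M.I aI) (M.omega M.I) X Y Z
        + 8 * s * wedge12 (act1 M.I θ) (M.omega M.I) X Y Z
        + wedge12 (act1 M.J M.lambdaK) (M.omega M.I) X Y Z
        - wedge12 (act1 M.K M.lambdaJ) (M.omega M.I) X Y Z := by
    simp only [wedge12]; ring
  have hwJ : (-(1/2 : ℝ)) • wedge12 (act1 M.J (fun W => 2 * act1 M.I M.lambdaI W
          + (4 + 4 * s) * aI W + (16 - 8 * s) * θ W)) (M.omega M.J) X Y Z
      = wedge12 (act1 M.K M.lambdaI) (M.omega M.J) X Y Z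
        - (2 + 2 * s) * wedge12 (act1 M.J aI) (M.omega M.J) X Y Z
        - (8 - 4 * s) * wedge12 (act1 M.J θ) (M.omega M.J) X Y Z := by
    simp only [wedge12, act1, M.K_def]; algebra
  have hwK : (-(1/2 : ℝ)) • wedge12 (act1 M.K (fun W => 2 * act1 M.I M.lambdaI W
          + (4 + 4 * s) * aI W + (16 - 8 * s) * θ W)) (M.omega M.K) X Y Z
      = -wedge12 (act1 M.J M.lambdaI) (M.omega M.K) X Y Z
        - (2 + 2 * s) * wedge12 (act1 M.K aI) (M.omega M.K) X Y Z
        - (8 - 4 * s) * wedge12 (act1 M.K θ) (M.omega M.K) X Y Z := by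
    simp only [wedge12, act1, M.K_def, M.I_sq, lin1_neg M.lin_lambdaI]; algebra
  rw [hwI, hwJ, hwK]
  linear_combination -2*c0 + s1 + s2 + t1 - t2 - t3 + cI + 3*hsum + 2*ksum + hE

end main
end AQH

namespace AQH

section rotlemmas

variable {n : ℕ} {C V : Type*} [CommRing C] [Algebra ℝ C] [AddCommGroup V] [Module C V]
  [Module ℝ V] [IsScalarTower ℝ C V]

variable (M : AQH n C V)

theorem rot_I : M.rot.I = M.J := rfl
theorem rot_J : M.rot.J = M.K := rfl
theorem rot_K : M.rot.K = M.I := rfl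
theorem rot_om (A : V → V) : M.rot.omega A = M.omega A := rfl
theorem rot_Lam (A : V → V) (β : V → V → V → C) : M.rot.Lam A β = M.Lam A β := rfl
theorem rot_lambdaI : M.rot.lambdaI = M.lambdaJ := rfl
theorem rot_lambdaJ : M.rot.lambdaJ = M.lambdaK := rfl
theorem rot_betaI : M.rot.betaI = M.betaJ := rfl
theorem rot_betaJ : M.rot.betaJ = M.betaK := rfl
theorem rot_nu4I : M.rot.nu4I = M.nu4J := by
  rw [nu4I, nu4J, rot_I, rot_betaI, rot_Lam]
theorem rot_nu4J : M.rot.nu4J = M.nu4K := by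
  rw [nu4J, nu4K, rot_J, rot_betaJ, rot_Lam]
theorem rot_nu3I : M.rot.nu3I = M.nu3J := by
  unfold nu3I nu3J; rw [rot_nu4I, rot_J, rot_betaI, rot_Lam]
theorem rot_nu3J : M.rot.nu3J = M.nu3K := by
  unfold nu3J nu3K; rw [rot_nu4J, rot_K, rot_betaJ, rot_Lam]
theorem rot_beta3KI : M.rot.beta3KI = M.beta3KJ := by
  unfold beta3KI beta3KJ betaE3I betaE3J beta4I beta4J
  simp only [rot_nu4I, rot_nu3I, rot_I, rot_J, rot_K, rot_betaI, rot_om]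
theorem rot_beta3KJ : M.rot.beta3KJ = M.beta3KK := by
  unfold beta3KJ beta3KK betaE3J betaE3K beta4J beta4K
  simp only [rot_nu4J, rot_nu3J, rot_I, rot_J, rot_K, rot_betaJ, rot_om]
theorem rot_beta3I : M.rot.beta3I = M.beta3J := by
  unfold beta3I beta3J; rw [rot_beta3KI, rot_J, rot_K]
theorem rot_beta3J : M.rot.beta3J = M.beta3K := by
  unfold beta3J beta3K; rw [rot_beta3KJ, rot_I, rot_K]
theorem rot_betaKI : M.rot.betaKI = M.betaKJ := by
  unfold betaKI betaKJ; rw [rot_beta3KI, rot_J, rot_K]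
theorem rot_betaKJ : M.rot.betaKJ = M.betaKK := by
  unfold betaKJ betaKK; rw [rot_beta3KJ, rot_I, rot_K]

end rotlemmas

section fin

variable {n : ℕ} {C V : Type*} [CommRing C] [Algebra ℝ C] [AddCommGroup V] [Module C V]
  [Module ℝ V] [IsScalarTower ℝ C V]

variable {M : AQH n C V}

variable {s : C} {ψ ψI ψJ ψK κ κI κJ κK : V → V → V → C} {aI aJ aK θ : V → C}

theorem Dec.compI (hn : 1 < n) (h : M.Dec s ψ ψI ψJ ψK κ κI κJ κK aI aJ aK θ) :
    (∀ X, M.nu3I X = 2 * act1 M.I M.lambdaI X + (4 + 4 * s) * aI X + (16 - 8 * s) * θ X) ∧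
    (∀ X Y Z, M.beta3I X Y Z = 6 * ψ X Y Z + 2 * calL M.I ψ X Y Z - 8 * ψI X Y Z) ∧
    (∀ X Y Z, M.betaKI X Y Z = -(16 * κ X Y Z) - 2 * κI X Y Z) := by
  obtain ⟨l, lI, lJ, lK⟩ := h.lin
  obtain ⟨a, bI, bJ, bK⟩ := h.alt
  have hlam : ∀ (A : V → V) X, M.Lam A (fun X Y Z => 6 * ψ X Y Z + 2 * calL M.I ψ X Y Z
      - 8 * ψI X Y Z - 16 * κ X Y Z - 2 * κI X Y Z) X = 6 * M.Lam A ψ X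
      + 2 * M.Lam A (calL M.I ψ) X - 8 * M.Lam A ψI X - 16 * M.Lam A κ X - 2 * M.Lam A κI X := by
    intro A X
    simp only [Lam, mul_smul_comm, ← smul_add, ← smul_sub, Finset.mul_sum,
      ← Finset.sum_add_distrib, ← Finset.sum_sub_distrib]
    congr 1
    refine Finset.sum_congr rfl fun i _ => Finset.sum_congr rfl fun j _ => ?_
    ring
  obtain ⟨ka, kl, kI, kJ, kK, kLI, kLJ, kLK⟩ := h.kap
  obtain ⟨kIa, kIl, kII, kIJ, kIK, kILI, kILJ, kILK⟩ := h.kapI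
  have l1 := lin_act1 M.I_lin h.linI
  have l2 := lin_act1 M.I_lin h.linθ
  have l3 := lin_act1 M.J_lin M.lin_lambdaK
  have l4 := lin_act1 M.K_lin M.lin_lambdaJ
  have l5 := lin_act1 M.I_lin M.lin_lambdaI
  obtain ⟨h3, hP⟩ := M.nu_of_dec hn (p := fun W => (6 + 2 * s) * act1 M.I aI W
      + 8 * s * act1 M.I θ W + act1 M.J M.lambdaK W - act1 M.K M.lambdaJ W)
    (ν := fun W => 2 * act1 M.I M.lambdaI W + (4 + 4 * s) * aI W + (16 - 8 * s) * θ W)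
    (P := fun X Y Z => 6 * ψ X Y Z + 2 * calL M.I ψ X Y Z
      - 8 * ψI X Y Z - 16 * κ X Y Z - 2 * κI X Y Z)
    (fun f X X' => by
      show _ = f * _ + _
      simp only [l1 f, l2 f, l3 f, l4 f]; ring)
    (fun f X X' => by
      show _ = f * _ + _
      simp only [l5 f, h.linI f, h.linθ f]; ring)
    (fun X => by
      rw [hlam, h.lam.1, M.lam_calL_I l a h.lam.1, h.lamI.1, kLI, kILI]; simp)
    (fun X => by
      rw [hlam, h.lam.2.1, M.lam_calL_J l a h.lam.2.1 h.lam.2.2, h.lamI.2.1, kLJ, kILJ]; simp)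
    h.betaI
  have hP' : M.beta3KI = fun X Y Z => 6 * ψ X Y Z + 2 * calL M.I ψ X Y Z
      - 8 * ψI X Y Z - 16 * κ X Y Z - 2 * κI X Y Z := by
    funext X Y Z; exact hP X Y Z
  have hL : ∀ (A : V → V) X Y Z, calL A M.beta3KI X Y Z = 6 * calL A ψ X Y Z
      + 2 * calL A (calL M.I ψ) X Y Z - 8 * calL A ψI X Y Z - 16 * calL A κ X Y Z
      - 2 * calL A κI X Y Z := by
    intro A X Y Z
    rw [hP']
    show ((_ : C) + _ + _) = 6 * (_ + _ + _) + 2 * (_ + _ + _) - 8 * (_ + _ + _)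
      - 16 * (_ + _ + _) - 2 * (_ + _ + _)
    simp only [op12, op13, op23]
    ring
  have hJK : ∀ X Y Z, calL M.J M.beta3KI X Y Z + calL M.K M.beta3KI X Y Z
      = -(24 * ψ X Y Z) - 8 * calL M.I ψ X Y Z + 32 * ψI X Y Z - 32 * κ X Y Z - 4 * κI X Y Z := by
    intro X Y Z
    have c0 := h.cas X Y Z
    have cI := h.casI X Y Z
    rw [h.typI] at cI
    have e := M.L_JI_KI l a X Y Z
    rw [hL, hL, kJ, kK, kIJ, kIK]
    linear_combination 8 * c0 - 8 * cI + 2 * e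
  refine ⟨h3, fun X Y Z => ?_, fun X Y Z => ?_⟩
  · rw [beta3I, sub_sub, hJK, hP]
    algebra
  · rw [betaKI, add_assoc, hJK, hP]
    algebra

theorem Dec.compJ (hn : 1 < n) (h : M.Dec s ψ ψI ψJ ψK κ κI κJ κK aI aJ aK θ) :
    (∀ X, M.nu3J X = 2 * act1 M.J M.lambdaJ X + (4 + 4 * s) * aJ X + (16 - 8 * s) * θ X) ∧
    (∀ X Y Z, M.beta3J X Y Z = 6 * ψ X Y Z + 2 * calL M.J ψ X Y Z - 8 * ψJ X Y Z) ∧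
    (∀ X Y Z, M.betaKJ X Y Z = -(16 * κ X Y Z) - 2 * κJ X Y Z) := by
  have := h.rot.compI hn
  rwa [rot_nu3I, rot_beta3I, rot_betaKI, rot_I, rot_lambdaI] at this

theorem Dec.compK (hn : 1 < n) (h : M.Dec s ψ ψI ψJ ψK κ κI κJ κK aI aJ aK θ) :
    (∀ X, M.nu3K X = 2 * act1 M.K M.lambdaK X + (4 + 4 * s) * aK X + (16 - 8 * s) * θ X) ∧
    (∀ X Y Z, M.beta3K X Y Z = 6 * ψ X Y Z + 2 * calL M.K ψ X Y Z - 8 * ψK X Y Z) ∧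
    (∀ X Y Z, M.betaKK X Y Z = -(16 * κ X Y Z) - 2 * κK X Y Z) := by
  have := h.rot.compJ hn
  rwa [rot_nu3J, rot_beta3J, rot_betaKJ, rot_J, rot_lambdaJ] at this

end fin
end AQH

namespace AQH

section thetas

variable {n : ℕ} {C V : Type*} [CommRing C] [Algebra ℝ C] [AddCommGroup V] [Module C V]
  [Module ℝ V] [IsScalarTower ℝ C V]

variable (M : AQH n C V)

theorem lin_theta (r : ℝ) {ι : Type*} (t : Finset ι) (F : ι → V) :
    Lin1 (fun X => r • ∑ i ∈ t, M.g (F i) X) := fun f X X' => by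
  simp only [M.g_add', M.g_smul', Finset.sum_add_distrib, ← Finset.mul_sum, smul_add,
    mul_smul_comm]

theorem theta_sum (hn : 1 < n) (X : V) :
    M.thetaXiI X + M.thetaXiJ X + M.thetaXiK X = 3 * M.thetaXi X := by
  have hr : (n : ℝ) - 1 ≠ 0 := by
    have : (1 : ℝ) < n := by exact_mod_cast hn
    linarith
  have hr2 : 2 * (n : ℝ) + 1 ≠ 0 := by positivity
  simp only [thetaXi, thetaXiI, thetaXiJ, thetaXiK]
  rw [← smul_add, ← smul_add, ← Finset.sum_add_distrib, ← Finset.sum_add_distrib]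
  simp only [← M.g_add, M.xi_sum]
  have h3 : ∀ c : C, 3 * c = (3 : ℝ) • c := fun c => by algebra
  rw [h3, smul_smul]
  congr 1
  field_simp
  norm_num

theorem frame_act (A : V → V) (hA : ∀ X Y, M.g (A X) Y = -M.g X (A Y)) (X Y : V) :
    ∑ i, M.g (M.frame i) X * M.g (A (M.frame i)) Y = M.g (A X) Y := by
  rw [hA X Y, ← M.g_frame X (A Y), ← Finset.sum_neg_distrib]
  exact Finset.sum_congr rfl fun i _ => by rw [hA, M.g_symm X]; ring

theorem frame_sub (F : Fin (4 * n) → V) (X Y Z : V) (a b : C) :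
    ∑ i, M.g (M.frame i) X * (M.g (F i) Y * a - M.g (F i) Z * b)
      = (∑ i, M.g (M.frame i) X * M.g (F i) Y) * a - (∑ i, M.g (M.frame i) X * M.g (F i) Z) * b := by
  rw [Finset.sum_mul, Finset.sum_mul, ← Finset.sum_sub_distrib]
  exact Finset.sum_congr rfl fun i _ => by ring

theorem xiEH3_eq (θ : V → C) (X Y Z : V) : M.xiEH3 θ X Y Z = 3 * (M.g X Y * θ Z - M.g X Z * θ Y)
  - ((M.g (M.I X) Y * act1 M.I θ Z - M.g (M.I X) Z * act1 M.I θ Y)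
    + (M.g (M.J X) Y * act1 M.J θ Z - M.g (M.J X) Z * act1 M.J θ Y)
    + (M.g (M.K X) Y * act1 M.K θ Z - M.g (M.K X) Z * act1 M.K θ Y))
  - 2 * algebraMap ℝ C (1 / (n : ℝ)) * (act1 M.I θ X * M.omega M.I Y Z
      + act1 M.J θ X * M.omega M.J Y Z + act1 M.K θ X * M.omega M.K Y Z) := by
  have h0 : ∀ Y, ∑ i, M.g (M.frame i) X * M.g (M.frame i) Y = M.g X Y := fun Y => by
    rw [← M.g_frame X Y]
    exact Finset.sum_congr rfl fun i _ => by rw [M.g_symm X]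
  simp only [xiEH3]
  rw [M.frame_sub, M.frame_sub (fun i => M.I (M.frame i)), M.frame_sub (fun i => M.J (M.frame i)),
    M.frame_sub (fun i => M.K (M.frame i))]
  simp only [h0, M.frame_act M.I M.gI, M.frame_act M.J M.gJ, M.frame_act M.K M.gK]
  rw [show (2 / (n : ℝ)) = 2 * (1 / (n : ℝ)) by ring]
  generalize (1 / (n : ℝ)) = r
  algebra

end thetas
end AQH

open AQH in
/-- For an almost quaternion-Hermitian `4n`-manifold, `n > 1`,
the six `Sp(n)Sp(1)`-components of the intrinsic torsion `ξ` are computed from the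
three-forms `β_A` via the formulas of Proposition 5.  The components are given
as hypotheses in the parametrized form described in §3 of the paper. -/
theorem statement7 {n : ℕ} {C V : Type*} [CommRing C] [Algebra ℝ C] [AddCommGroup V]
    [Module C V] [Module ℝ V] [IsScalarTower ℝ C V]
    (hn : 1 < n) (M : AQH n C V)
    (xi33 xiK3 xiE3 xi3H xiKH xiEH : V → V → V)
    (ψ3 ψ3I ψ3J ψ3K ψK ψKI ψKJ ψKK : V → V → V → C)
    -- decomposition of the intrinsic torsion into the six components
    (hdec : ∀ X Y, M.xi X Y
      = xi33 X Y + xiK3 X Y + xiE3 X Y + xi3H X Y + xiKH X Y + xiEH X Y)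
    -- `ξ_{33}` is given by a three-form `ψ^{(3)} ∈ Λ³₀E S³H`
    (hψ3 : IsAlt3 ψ3 ∧ Lin3 ψ3
      ∧ (∀ X Y Z, calL M.I ψ3 X Y Z + calL M.J ψ3 X Y Z + calL M.K ψ3 X Y Z
          = -((3:ℝ) • ψ3 X Y Z))
      ∧ M.Lam M.I ψ3 = 0 ∧ M.Lam M.J ψ3 = 0 ∧ M.Lam M.K ψ3 = 0)
    (h33 : ∀ X Y Z, M.g Y (xi33 X Z) = ψ3 X Y Z)
    -- `ξ_{3H}` is given by local three-forms `ψ^{(3)}_A ∈ Λ³₀E S³H` of type `{2,1}_A`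
    -- summing to zero
    (hψ3I : IsAlt3 ψ3I ∧ Lin3 ψ3I
      ∧ (∀ X Y Z, calL M.I ψ3I X Y Z + calL M.J ψ3I X Y Z + calL M.K ψ3I X Y Z
          = -((3:ℝ) • ψ3I X Y Z))
      ∧ M.Lam M.I ψ3I = 0 ∧ M.Lam M.J ψ3I = 0 ∧ M.Lam M.K ψ3I = 0
      ∧ calL M.I ψ3I = ψ3I)
    (hψ3J : IsAlt3 ψ3J ∧ Lin3 ψ3J
      ∧ (∀ X Y Z, calL M.I ψ3J X Y Z + calL M.J ψ3J X Y Z + calL M.K ψ3J X Y Z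
          = -((3:ℝ) • ψ3J X Y Z))
      ∧ M.Lam M.I ψ3J = 0 ∧ M.Lam M.J ψ3J = 0 ∧ M.Lam M.K ψ3J = 0
      ∧ calL M.J ψ3J = ψ3J)
    (hψ3K : IsAlt3 ψ3K ∧ Lin3 ψ3K
      ∧ (∀ X Y Z, calL M.I ψ3K X Y Z + calL M.J ψ3K X Y Z + calL M.K ψ3K X Y Z
          = -((3:ℝ) • ψ3K X Y Z))
      ∧ M.Lam M.I ψ3K = 0 ∧ M.Lam M.J ψ3K = 0 ∧ M.Lam M.K ψ3K = 0
      ∧ calL M.K ψ3K = ψ3K)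
    (hψ3sum : ∀ X Y Z, ψ3I X Y Z + ψ3J X Y Z + ψ3K X Y Z = 0)
    (h3H : ∀ X Y Z, M.g Y (xi3H X Z)
      = op23 M.I ψ3I X Y Z + op23 M.J ψ3J X Y Z + op23 M.K ψ3K X Y Z)
    -- `ξ_{KH}` is given by a three-form `ψ^{(K)} ∈ KH`
    (hψK : M.InKH3 ψK)
    (hKH : ∀ X Y Z, M.g Y (xiKH X Z) = M.xiKH3 ψK X Y Z)
    -- `ξ_{K3}` is given by local three-forms `ψ^{(K)}_A ∈ KH` summing to zero
    (hψKI : M.InKH3 ψKI) (hψKJ : M.InKH3 ψKJ) (hψKK : M.InKH3 ψKK)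
    (hψKsum : ∀ X Y Z, ψKI X Y Z + ψKJ X Y Z + ψKK X Y Z = 0)
    (hK3 : ∀ X Y Z, M.g Y (xiK3 X Z)
      = op23 M.I ψKI X Y Z + op23 M.J ψKJ X Y Z + op23 M.K ψKK X Y Z)
    -- `ξ_{E3}` is given by the local one-forms `θ^ξ_A` via
    -- `(1/n) Σ_A ( n A(θ^ξ_A - θ^ξ) ∧ ω_A - (n-1) A(θ^ξ_A - θ^ξ) ⊗ ω_A )`
    (hE3 : ∀ X Y Z, M.g Y (xiE3 X Z) = (1/(n:ℝ)) •
      (((n:ℝ) • wedge12 (act1 M.I (fun W => M.thetaXiI W - M.thetaXi W)) (M.omega M.I) X Y Z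
          - ((n:ℝ)-1) • (act1 M.I (fun W => M.thetaXiI W - M.thetaXi W) X * M.omega M.I Y Z))
        + ((n:ℝ) • wedge12 (act1 M.J (fun W => M.thetaXiJ W - M.thetaXi W)) (M.omega M.J) X Y Z
          - ((n:ℝ)-1) • (act1 M.J (fun W => M.thetaXiJ W - M.thetaXi W) X * M.omega M.J Y Z))
        + ((n:ℝ) • wedge12 (act1 M.K (fun W => M.thetaXiK W - M.thetaXi W)) (M.omega M.K) X Y Z
          - ((n:ℝ)-1) • (act1 M.K (fun W => M.thetaXiK W - M.thetaXi W) X * M.omega M.K Y Z))))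
    -- `ξ_{EH}` is given by the global one-form `θ^ξ`
    (hEH : ∀ X Y Z, M.g Y (xiEH X Z) = M.xiEH3 M.thetaXi X Y Z) :
    -- (i) `ψ^{(3)} = (1/12)(β_I^{(3)} + β_J^{(3)} + β_K^{(3)})`
    (∀ X Y Z, ψ3 X Y Z = (1/12:ℝ) • (M.beta3I X Y Z + M.beta3J X Y Z + M.beta3K X Y Z)) ∧
    -- (ii) `ψ^{(3)}_A = -(1/8) β_A^{(3)} + (1/48)(3 + 𝓛_A) Σ_B β_B^{(3)}`
    (∀ X Y Z, ψ3I X Y Z = M.psi3I X Y Z) ∧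
    (∀ X Y Z, ψ3J X Y Z = M.psi3J X Y Z) ∧
    (∀ X Y Z, ψ3K X Y Z = M.psi3K X Y Z) ∧
    -- (iii) `ψ^{(K)} = -(1/48)(β_I^{(K)} + β_J^{(K)} + β_K^{(K)})`
    (∀ X Y Z, ψK X Y Z = (-(1/48:ℝ)) • (M.betaKI X Y Z + M.betaKJ X Y Z + M.betaKK X Y Z)) ∧
    -- (iv) `ψ^{(K)}_A = -(1/2) β_A^{(K)} + (1/6) Σ_B β_B^{(K)}`
    (∀ X Y Z, ψKI X Y Z = M.psiKI X Y Z) ∧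
    (∀ X Y Z, ψKJ X Y Z = M.psiKJ X Y Z) ∧
    (∀ X Y Z, ψKK X Y Z = M.psiKK X Y Z) ∧
    -- (v) `θ^ξ = (n/(24(2n-1))) Σ_A (ν^A_3 - 2 A λ_A)`
    (∀ X, M.thetaXi X = ((n:ℝ)/(24*(2*(n:ℝ)-1))) •
      ((M.nu3I X - (2:ℝ) • act1 M.I M.lambdaI X)
        + (M.nu3J X - (2:ℝ) • act1 M.J M.lambdaJ X)
        + (M.nu3K X - (2:ℝ) • act1 M.K M.lambdaK X))) ∧
    -- (vi) `θ^ξ_A = (n/(4(n+1))) ((ν^A_3 - 2Aλ_A) - ((n-1)/(2(2n-1))) Σ_B (ν^B_3 - 2Bλ_B))`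
    (∀ X, M.thetaXiI X = ((n:ℝ)/(4*((n:ℝ)+1))) •
      ((M.nu3I X - (2:ℝ) • act1 M.I M.lambdaI X)
        - (((n:ℝ)-1)/(2*(2*(n:ℝ)-1))) •
          ((M.nu3I X - (2:ℝ) • act1 M.I M.lambdaI X)
            + (M.nu3J X - (2:ℝ) • act1 M.J M.lambdaJ X)
            + (M.nu3K X - (2:ℝ) • act1 M.K M.lambdaK X)))) ∧
    (∀ X, M.thetaXiJ X = ((n:ℝ)/(4*((n:ℝ)+1))) •
      ((M.nu3J X - (2:ℝ) • act1 M.J M.lambdaJ X)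
        - (((n:ℝ)-1)/(2*(2*(n:ℝ)-1))) •
          ((M.nu3I X - (2:ℝ) • act1 M.I M.lambdaI X)
            + (M.nu3J X - (2:ℝ) • act1 M.J M.lambdaJ X)
            + (M.nu3K X - (2:ℝ) • act1 M.K M.lambdaK X)))) ∧
    (∀ X, M.thetaXiK X = ((n:ℝ)/(4*((n:ℝ)+1))) •
      ((M.nu3K X - (2:ℝ) • act1 M.K M.lambdaK X)
        - (((n:ℝ)-1)/(2*(2*(n:ℝ)-1))) •
          ((M.nu3I X - (2:ℝ) • act1 M.I M.lambdaI X)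
            + (M.nu3J X - (2:ℝ) • act1 M.J M.lambdaJ X)
            + (M.nu3K X - (2:ℝ) • act1 M.K M.lambdaK X)))) := by
  have hn0 : (n : ℝ) ≠ 0 := by
    have : (1 : ℝ) < n := by exact_mod_cast hn
    linarith
  have hn1 : 2 * (n : ℝ) - 1 ≠ 0 := by
    have : (1 : ℝ) < n := by exact_mod_cast hn
    linarith
  have hn3 : 2 * (n : ℝ) + -1 ≠ 0 := by simpa [sub_eq_add_neg] using hn1
  have hn4 : -1 + 2 * (n : ℝ) ≠ 0 := by rwa [add_comm]
  have hn5 : -1 + (n : ℝ) * 2 ≠ 0 := by rwa [mul_comm]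
  have hn2 : (n : ℝ) + 1 ≠ 0 := by positivity
  have e3 : ∀ c : C, (3 : ℝ) • c = 3 * c := fun c => by algebra
  have lθ : Lin1 M.thetaXi := M.lin_theta _ _ _
  have lθI : Lin1 M.thetaXiI := M.lin_theta _ _ _
  have lθJ : Lin1 M.thetaXiJ := M.lin_theta _ _ _
  have lθK : Lin1 M.thetaXiK := M.lin_theta _ _ _
  have hsub : ∀ {α β : V → C}, Lin1 α → Lin1 β → Lin1 (fun W => α W - β W) :=
    fun {α β} h1 h2 f X X' => by
      show _ = f * _ + _
      simp only [h1 f, h2 f]; ring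
  obtain ⟨a0, l0, c0, m0⟩ := hψ3
  obtain ⟨aI, lI, cI, mI, mI', mI'', tI⟩ := hψ3I
  obtain ⟨aJ, lJ, cJ, mJ, mJ', mJ'', tJ⟩ := hψ3J
  obtain ⟨aK, lK, cK, mK, mK', mK'', tK⟩ := hψ3K
  simp only [e3] at c0 cI cJ cK
  have D : M.Dec (algebraMap ℝ C (1 / (n : ℝ))) ψ3 ψ3I ψ3J ψ3K ψK ψKI ψKJ ψKK
      (fun W => M.thetaXiI W - M.thetaXi W) (fun W => M.thetaXiJ W - M.thetaXi W)
      (fun W => M.thetaXiK W - M.thetaXi W) M.thetaXi :=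
    { T_eq := by
        intro X Y Z
        simp only [T3, hdec, M.g_add', h33, hK3, hE3, h3H, hKH, hEH, M.xiEH3_eq, xiKH3, e3, etens]
        have hr : ∀ w a : C, (n : ℝ) • w - ((n : ℝ) - 1) • a
            = (n : ℝ) • (w - (1 - algebraMap ℝ C (1 / (n : ℝ))) * a) := fun w a => by
          rw [sub_mul, one_mul, ← Algebra.smul_def]
          match_scalars <;> field_simp
        rw [hr, hr, hr, ← smul_add, ← smul_add, smul_smul, one_div_mul_cancel hn0, one_smul]
        ring
      lin := ⟨l0, lI, lJ, lK⟩
      alt := ⟨a0, aI, aJ, aK⟩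
      cas := c0
      casI := cI
      casJ := cJ
      casK := cK
      lam := m0
      lamI := ⟨mI, mI', mI''⟩
      lamJ := ⟨mJ, mJ', mJ''⟩
      lamK := ⟨mK, mK', mK''⟩
      typI := tI
      typJ := tJ
      typK := tK
      sum := hψ3sum
      ksum := hψKsum
      kap := hψK
      kapI := hψKI
      kapJ := hψKJ
      kapK := hψKK
      linI := hsub lθI lθ
      linJ := hsub lθJ lθ
      linK := hsub lθK lθ
      linθ := lθ
      asum := fun X => by linear_combination M.theta_sum hn X }
  obtain ⟨nI, bI, kI⟩ := D.compI hn
  obtain ⟨nJ, bJ, kJ⟩ := D.compJ hn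
  obtain ⟨nK, bK, kK⟩ := D.compK hn
  have hb : ∀ X Y Z, M.beta3I X Y Z + M.beta3J X Y Z + M.beta3K X Y Z = 12 * ψ3 X Y Z := by
    intro X Y Z
    rw [bI, bJ, bK]
    linear_combination 2 * c0 X Y Z - 8 * hψ3sum X Y Z
  have hbL : ∀ (A : V → V) X Y Z,
      calL A (fun a b c => M.beta3I a b c + M.beta3J a b c + M.beta3K a b c) X Y Z
        = 12 * calL A ψ3 X Y Z := by
    intro A X Y Z
    simp only [calL, op12, op13, op23, hb]; ring
  have hk : ∀ X Y Z, M.betaKI X Y Z + M.betaKJ X Y Z + M.betaKK X Y Z = -(48 * ψK X Y Z) := by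
    intro X Y Z
    rw [kI, kJ, kK]
    linear_combination -2 * hψKsum X Y Z
  have hs : ∀ c : C, algebraMap ℝ C (1 / (n : ℝ)) * c = (1 / (n : ℝ)) • c := fun c =>
    (Algebra.smul_def _ _).symm
  have hth := M.theta_sum hn
  have v : ∀ (ν l a t : C), ν = 2 * l + (4 + 4 * algebraMap ℝ C (1 / (n : ℝ))) * (a - t)
        + (16 - 8 * algebraMap ℝ C (1 / (n : ℝ))) * t →
      ν - (2 : ℝ) • l = (4 + 4 / (n : ℝ)) • a + (12 - 12 / (n : ℝ)) • t := by
    rintro ν l a t rfl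
    rw [show (4 / (n : ℝ)) = 4 * (1 / n) by ring, show (12 / (n : ℝ)) = 12 * (1 / n) by ring]
    generalize (1 / (n : ℝ)) = r
    algebra
  have vI := fun X => v _ _ _ _ (nI X)
  have vJ := fun X => v _ _ _ _ (nJ X)
  have vK := fun X => v _ _ _ _ (nK X)
  have hK' : ∀ X, M.thetaXiK X = (3 : ℝ) • M.thetaXi X - M.thetaXiI X - M.thetaXiJ X := fun X => by
    rw [e3, ← hth]; ring
  refine ⟨fun X Y Z => ?_, fun X Y Z => ?_, fun X Y Z => ?_, fun X Y Z => ?_, fun X Y Z => ?_,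
    fun X Y Z => ?_, fun X Y Z => ?_, fun X Y Z => ?_, fun X => ?_, fun X => ?_, fun X => ?_,
    fun X => ?_⟩
  · rw [hb]; algebra
  · rw [psi3I, hb, hbL, bI]; algebra
  · rw [psi3J, hb, hbL, bJ]; algebra
  · rw [psi3K, hb, hbL, bK]; algebra
  · rw [hk]; algebra
  · rw [psiKI, hk, kI]; algebra
  · rw [psiKJ, hk, kJ]; algebra
  · rw [psiKK, hk, kK]; algebra
  · rw [vI, vJ, vK, hK']
    match_scalars <;> (try field_simp) <;> (try ring_nf) <;> (try field_simp) <;> ring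
  · rw [vI, vJ, vK, hK']
    match_scalars <;> (try field_simp) <;> (try ring_nf) <;> (try field_simp) <;> ring
  · rw [vI, vJ, vK, hK']
    match_scalars <;> (try field_simp) <;> (try ring_nf) <;> (try field_simp) <;> ring
  · rw [vI, vJ, vK, hK']
    match_scalars <;> (try field_simp) <;> (try ring_nf) <;> (try field_simp) <;> ring
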